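/- arXiv:2401.01351 — 3 statements merged into one kernel-verified Lean document; each statement's English description precedes it below -/
import Mathlib

section
/- Let u > 1 be fixed and let ω be the Buchstab function. Then for every ε > 0 there exists x₀ such that for all x ≥ x₀ and all y with εx ≤ y ≤ x, setting z = x^{1/u}, one has | #{n : x < n ≤ x + y, n has no prime factor < z} − ω(u)·y/log z | ≤ ε·y/log z. -/
/-!
Write `Φ(x, z)` for the number of `z`-rough integers up to `x` (those without prime factors `< z`)
and `r` for their indicator function. The count in question is `Φ(x + y, z) - Φ(x, z)`, so it
suffices to show `Φ(x, z) log z = ω(log x / log z) x - z + o(x)` uniformly for `z ≤ x ≤ z ^ K`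
(`roughCount_asymp`), and then to use the continuity of `ω` at `u`.

The prime number theorem (`psi_asymp`, `theta_asymp`) is derived by Fejér-kernel smoothing in the
manner of Wiener and Ikehara. The Laplace transform of `ψ(eᵗ) e⁻ᵗ - 1` extends continuously to the
line `re s = 0`, so the convolution of this function with a Fejér kernel tends to `0` by the
Riemann–Lebesgue lemma (`tendsto_fejer_psiErr`); monotonicity of `ψ` removes the smoothing
(`psiErr_bounds`).

Since `r` is completely multiplicative and `log = Λ * 1`, one has
`∑ r(n) log n = ∑ r(m) R(x/m)` with `R(y) = ∑ r(d) Λ(d)` over `d ≤ y` (`sum_rough_log`). Here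
`R(y) = 0` for `y < z`, and `R(y) = y - z + o(y)` for `y ≥ z` by the prime number theorem
(`roughPsi_asymp`). Partial summation turns the right side into the integral of `x Φ(t, z) / t²`
over `1 ≤ t ≤ x / z`, while `log n` may be replaced by `log x` on the left (`roughCount_mul_log`);
the errors are controlled by the bound `Φ(t, z) = O(1 + t / log z)` (`roughCount_crude`), which
the same identity yields by induction together with Chebyshev's bound for `ψ`.

The resulting formula `Φ(x, z) log x = x ∫ Φ(t, z) t⁻² dt + o(x)` determines `Φ` on
`[z, z ^ (K + 1)]` from its values on `[1, z ^ K]`. With `v = log t / log z` it is the integrated form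
of `(v ω(v))' = ω(v - 1)` (`integral_buchstab`), so induction on `K` from the explicit range
`z ≤ x ≤ z²` gives the asymptotics.
-/

section

open Set Filter MeasureTheory Topology

/-! ### The Laplace transform of the normalised error of `ψ` -/

/-- The normalised error `ψ(eᵗ) e⁻ᵗ - 1` of the Chebyshev function in the logarithmic variable. -/
noncomputable def psiErr (t : ℝ) : ℝ := Chebyshev.psi (Real.exp t) * Real.exp (-t) - 1

lemma measurable_psiErr : Measurable psiErr := by
  unfold psiErr
  have := Chebyshev.psi_mono.measurable
  fun_prop

lemma abs_psiErr_le (t : ℝ) : |psiErr t| ≤ Real.log 4 + 5 := by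
  have h1 := Chebyshev.psi_le_const_mul_self (Real.exp_pos t).le
  have h0 := Chebyshev.psi_nonneg (Real.exp t)
  have h2 : Chebyshev.psi (Real.exp t) * Real.exp (-t) ≤ Real.log 4 + 4 := by
    rw [Real.exp_neg, ← div_eq_mul_inv, div_le_iff₀ (Real.exp_pos t)]
    exact h1
  have h3 : 0 ≤ Chebyshev.psi (Real.exp t) * Real.exp (-t) := by positivity
  have h4 : 0 ≤ Real.log 4 := Real.log_nonneg (by norm_num)
  unfold psiErr
  rw [abs_le]; constructor <;> linarith

/-- The Laplace transform of `psiErr`, continued to the closed half plane `0 ≤ re s`. There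
`LFunctionResidueClassAux (1 : ZMod 1) (1 + s)` is `-ζ'/ζ (1 + s) - 1 / s`, whose continuity up to
the line `re s = 0` encodes the non-vanishing of `ζ` on `re s = 1`. -/
noncomputable def psiErrLaplace (s : ℂ) : ℂ :=
  (ArithmeticFunction.vonMangoldt.LFunctionResidueClassAux (1 : ZMod 1) (1 + s) - 1) / (1 + s)

lemma continuousOn_psiErrLaplace : ContinuousOn psiErrLaplace {s | 0 ≤ s.re} := by
  unfold psiErrLaplace
  refine ContinuousOn.div ?_ (by fun_prop) ?_
  · refine ContinuousOn.sub ?_ continuousOn_const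
    refine (ArithmeticFunction.vonMangoldt.continuousOn_LFunctionResidueClassAux
      (1 : ZMod 1)).comp (f := fun s => 1 + s) (by fun_prop) ?_
    intro s hs
    simpa using hs
  · intro s hs h
    have := congrArg Complex.re h
    simp at this hs
    linarith

/-- For `0 < re s` the Laplace transform of `psiErr` is `psiErrLaplace s`: this is the integral
formula for the Dirichlet series of `Λ`, after the substitution `x = eᵗ`. -/
lemma laplace_psiErr {s : ℂ} (hs : 0 < s.re) :
    ∫ t in Ioi (0 : ℝ), (psiErr t : ℂ) * Complex.exp (-s * t) = psiErrLaplace s := by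
  have hs0 : s ≠ 0 := fun h => by simp [h] at hs
  have hs1 : 1 + s ≠ 0 := fun h => by
    have := congrArg Complex.re h
    simp at this; linarith
  have hA := ArithmeticFunction.vonMangoldt.eqOn_LFunctionResidueClassAux (q := 1)
    (a := (1 : ZMod 1)) isUnit_one (show 1 < (1 + s).re by simpa using hs)
  have hres : (fun n : ℕ => ((ArithmeticFunction.vonMangoldt.residueClass (1 : ZMod 1) n : ℝ) : ℂ))
      = fun n => ((ArithmeticFunction.vonMangoldt n : ℝ) : ℂ) := by
    funext n
    simp [ArithmeticFunction.vonMangoldt.residueClass, Set.indicator, Subsingleton.elim _ (1 : ZMod 1)]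
  have hL := LSeries_eq_mul_integral_of_nonneg (fun n => ArithmeticFunction.vonMangoldt n)
    zero_le_one (s := 1 + s) (by simpa using hs) (by
      refine Asymptotics.IsBigO.of_bound (Real.log 4 + 4) (Eventually.of_forall fun n => ?_)
      have := Chebyshev.psi_le_const_mul_self (Nat.cast_nonneg (α := ℝ) n)
      have h0 := Chebyshev.psi_nonneg (n : ℝ)
      rw [Chebyshev.psi, Nat.floor_natCast] at this h0
      rw [← Finset.Icc_add_one_left_eq_Ioc, zero_add] at this h0
      simp only [Real.rpow_one, Real.norm_natCast]
      rw [Real.norm_of_nonneg h0]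
      exact this) (fun n => ArithmeticFunction.vonMangoldt_nonneg)
  -- the substitution `x = eᵗ` in the integral formula for the Dirichlet series
  have hcov : ∫ t in Ioi (1 : ℝ), (∑ k ∈ Finset.Icc 1 ⌊t⌋₊,
      ((ArithmeticFunction.vonMangoldt k : ℝ) : ℂ)) * (t : ℂ) ^ (-(1 + s + 1)) =
      ∫ t in Ioi (0 : ℝ), ((psiErr t : ℂ) + 1) * Complex.exp (-s * t) := by
    have himg : Real.exp '' Ioi 0 = Ioi 1 := by
      ext y; constructor
      · rintro ⟨x, hx, rfl⟩; simpa using hx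
      · intro hy
        exact ⟨Real.log y, Real.log_pos hy, Real.exp_log (by linarith [mem_Ioi.1 hy])⟩
    rw [← himg, integral_image_eq_integral_abs_deriv_smul measurableSet_Ioi
      (fun x _ => (Real.hasDerivAt_exp x).hasDerivWithinAt) (Real.exp_injective.injOn)]
    refine setIntegral_congr_fun measurableSet_Ioi fun t _ => ?_
    have hpsi : (∑ k ∈ Finset.Icc 1 ⌊Real.exp t⌋₊,
      ((ArithmeticFunction.vonMangoldt k : ℝ) : ℂ)) = (Chebyshev.psi (Real.exp t) : ℂ) := by
      rw [Chebyshev.psi, ← Finset.Icc_add_one_left_eq_Ioc]; push_cast; rfl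
    simp only [hpsi, psiErr, abs_of_pos (Real.exp_pos t), Complex.real_smul]
    rw [Complex.cpow_def_of_ne_zero (by exact_mod_cast (Real.exp_pos t).ne'),
      ← Complex.ofReal_log (Real.exp_pos t).le, Real.log_exp]
    push_cast
    rw [sub_add_cancel, show (t : ℂ) * -(1 + s + 1) = -t + -t + -s * t by ring, Complex.exp_add,
      Complex.exp_add]
    have : Complex.exp t * Complex.exp (-t) = 1 := by rw [← Complex.exp_add]; simp
    linear_combination (Chebyshev.psi (Real.exp t) : ℂ) * Complex.exp (-t) * Complex.exp (-s*t) * this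
  have hint1 : IntegrableOn (fun t : ℝ => Complex.exp (-s * t)) (Ioi 0) :=
    integrableOn_exp_mul_complex_Ioi (by simpa using hs) 0
  have hint2 : IntegrableOn (fun t : ℝ => (psiErr t : ℂ) * Complex.exp (-s * t)) (Ioi 0) := by
    refine Integrable.bdd_mul (c := Real.log 4 + 5) hint1 ?_ ?_
    · exact (Complex.measurable_ofReal.comp measurable_psiErr).aestronglyMeasurable
    · exact Eventually.of_forall fun t => by simpa using abs_psiErr_le t
  have hsplit : ∫ t in Ioi (0 : ℝ), ((psiErr t : ℂ) + 1) * Complex.exp (-s * t) =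
      (∫ t in Ioi (0 : ℝ), (psiErr t : ℂ) * Complex.exp (-s * t)) + 1 / s := by
    simp_rw [add_mul, one_mul]
    rw [integral_add hint2 hint1, integral_exp_mul_complex_Ioi (by simpa using hs)]
    congr 1
    simp [neg_div, div_neg]
  rw [hcov, hsplit] at hL
  simp only [hres, hL] at hA
  unfold psiErrLaplace
  rw [hA]
  simp
  field_simp
  ring

/-! ### The Fejér kernel -/

/-- The Fejér kernel `L sinc² (L s / 2)`, concentrated at scale `1 / L`, normalised without the
factor `1 / (2 π)`, so that its total mass does not depend on `L`. -/
noncomputable def fejer (L s : ℝ) : ℝ := L * Real.sinc (L * s / 2) ^ 2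

/-- The Fejér kernel is the Fourier transform of the triangle function on `[-L, L]`. -/
lemma fejer_eq_integral {L : ℝ} (hL : 0 < L) {s : ℝ} (hs : s ≠ 0) :
    ∫ w in (-L)..L, ((1 - |w| / L : ℝ) : ℂ) * Complex.exp (Complex.I * w * s) = fejer L s := by
  -- the half `[0, L]`, by an explicit antiderivative; the other half is its value at `-s`
  have half : ∀ r : ℝ, r ≠ 0 → ∫ w in (0 : ℝ)..L,
      ((1 - |w| / L : ℝ) : ℂ) * Complex.exp (Complex.I * w * r) =
      (Complex.exp (Complex.I * L * r) - 1) / (L * (Complex.I * r) ^ 2) - 1 / (Complex.I * r) := by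
    intro r hr
    have hrc : (r : ℂ) ≠ 0 := by exact_mod_cast hr
    have hI : Complex.I ≠ 0 := Complex.I_ne_zero
    have hLc : (L : ℂ) ≠ 0 := by exact_mod_cast hL.ne'
    have : ∫ w in (0 : ℝ)..L, ((1 - |w| / L : ℝ) : ℂ) * Complex.exp (Complex.I * w * r) =
      ∫ w in (0 : ℝ)..L, (1 - (w : ℂ) / L) * Complex.exp (Complex.I * w * r) := by
      refine intervalIntegral.integral_congr fun w hw => ?_
      rw [uIcc_of_le hL.le] at hw
      simp [abs_of_nonneg hw.1]
    rw [this]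
    have hd : ∀ w ∈ uIcc (0 : ℝ) L, HasDerivAt (fun w : ℝ =>
        (1 - (w : ℂ) / L) * Complex.exp (Complex.I * w * r) / (Complex.I * r) +
        Complex.exp (Complex.I * w * r) / (L * (Complex.I * r) ^ 2))
        ((1 - (w : ℂ) / L) * Complex.exp (Complex.I * w * r)) w := by
      intro w _
      have h1 : HasDerivAt (fun w : ℝ => (w : ℂ)) 1 w := Complex.ofRealCLM.hasDerivAt
      have h2 : HasDerivAt (fun w : ℝ => Complex.exp (Complex.I * w * r)) _ w :=
        ((h1.const_mul Complex.I).mul_const (r : ℂ)).cexp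
      have h3 := (((h1.div_const (L : ℂ)).const_sub 1).mul h2).div_const (Complex.I * r)
      refine (h3.add (h2.div_const (L * (Complex.I * r) ^ 2))).congr_deriv ?_
      field_simp
      ring
    rw [intervalIntegral.integral_eq_sub_of_hasDerivAt hd
      (Continuous.intervalIntegrable (by fun_prop) _ _)]
    simp [hLc]
    field_simp
    ring
  have hii : ∀ a b : ℝ, IntervalIntegrable (fun w : ℝ =>
      ((1 - |w| / L : ℝ) : ℂ) * Complex.exp (Complex.I * w * s)) volume a b :=
    fun a b => Continuous.intervalIntegrable (by fun_prop) _ _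
  rw [← intervalIntegral.integral_add_adjacent_intervals (hii (-L) 0) (hii 0 L), half s hs]
  have hneg : ∫ w in (-L)..0, ((1 - |w| / L : ℝ) : ℂ) * Complex.exp (Complex.I * w * s) =
      ∫ w in (0 : ℝ)..L, ((1 - |w| / L : ℝ) : ℂ) * Complex.exp (Complex.I * w * (-s : ℝ)) := by
    rw [← neg_zero, ← intervalIntegral.integral_comp_neg]
    simp
  rw [hneg, half (-s) (neg_ne_zero.2 hs)]
  have hsc : (s : ℂ) ≠ 0 := by exact_mod_cast hs
  have hLc : (L : ℂ) ≠ 0 := by exact_mod_cast hL.ne'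
  unfold fejer
  rw [Real.sinc_of_ne_zero (by positivity)]
  have hcos : Complex.exp (Complex.I * L * s) + Complex.exp (Complex.I * L * (-s : ℝ)) =
      2 - 4 * (Real.sin (L * s / 2) : ℂ) ^ 2 := by
    have h1 := Complex.two_cos (L * s : ℂ)
    have h2 : Complex.cos (L * s : ℂ) = 1 - 2 * Complex.sin (L * s / 2) ^ 2 := by
      have := Complex.cos_two_mul (L * s / 2 : ℂ)
      rw [show 2 * (L * s / 2 : ℂ) = L * s by ring] at this
      rw [this, Complex.cos_sq']; ring
    push_cast
    rw [show Complex.I * L * s = (L * s) * Complex.I by ring,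
      show Complex.I * L * -s = -(L * s) * Complex.I by ring, ← h1, h2]
    ring
  have hgen : ∀ a b S : ℂ, a + b = 2 - 4 * S ^ 2 →
      (b - 1) / (L * (Complex.I * ((-s : ℝ) : ℂ)) ^ 2) - 1 / (Complex.I * ((-s : ℝ) : ℂ)) +
      ((a - 1) / (L * (Complex.I * s) ^ 2) - 1 / (Complex.I * s)) =
      L * (S / (L * s / 2)) ^ 2 := by
    intro a b S h
    have : b = 2 - 4 * S ^ 2 - a := by linear_combination h
    subst this
    push_cast
    simp only [mul_pow, Complex.I_sq, neg_sq]
    field_simp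
    ring
  push_cast at hcos hgen ⊢
  exact hgen _ _ _ hcos


lemma fejer_nonneg {L : ℝ} (hL : 0 ≤ L) (s : ℝ) : 0 ≤ fejer L s := by
  unfold fejer; positivity

lemma continuous_fejer (L : ℝ) : Continuous (fejer L) := by
  unfold fejer
  have := Real.continuous_sinc
  fun_prop

lemma fejer_scale (L s : ℝ) : fejer L s = L * fejer 1 (L * s) := by
  simp [fejer]

lemma integrable_fejer_one : Integrable (fejer 1) := by
  refine (integrable_inv_one_add_sq.const_mul 5).mono'
    (continuous_fejer 1).aestronglyMeasurable (Eventually.of_forall fun s => ?_)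
  rw [Real.norm_of_nonneg (fejer_nonneg zero_le_one s), ← div_eq_mul_inv,
    le_div_iff₀ (by positivity)]
  simp only [fejer, one_mul]
  have h1 : Real.sinc (s / 2) ^ 2 ≤ 1 := by
    rw [sq_le_one_iff_abs_le_one]; exact Real.abs_sinc_le_one _
  have h2 : s ^ 2 * Real.sinc (s / 2) ^ 2 ≤ 4 := by
    rcases eq_or_ne s 0 with rfl | hs
    · norm_num
    · rw [Real.sinc_of_ne_zero (by positivity)]
      have := Real.sin_sq_le_one (s / 2)
      field_simp
      nlinarith
  nlinarith

lemma integrable_fejer {L : ℝ} (hL : 0 < L) : Integrable (fejer L) := by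
  have := (integrable_fejer_one.comp_mul_left' hL.ne').const_mul L
  exact this.congr (Eventually.of_forall fun s => (fejer_scale L s).symm)

lemma integral_fejer_one_pos : 0 < ∫ s, fejer 1 s := by
  refine integral_pos_of_integrable_nonneg_nonzero (x := 0) (continuous_fejer 1)
    integrable_fejer_one (fun s => fejer_nonneg zero_le_one s) ?_
  simp [fejer]

/-- Smoothing the Laplace transform to the right of the critical line by the Fejér kernel. -/
lemma fejer_laplace_aux {L : ℝ} (hL : 0 < L) (v : ℝ) {σ : ℝ} (hσ : 0 < σ) :
    ∫ w in (-L)..L, ((1 - |w| / L : ℝ) : ℂ) * Complex.exp (Complex.I * w * v) *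
      psiErrLaplace (σ + Complex.I * w) =
    ∫ t in Ioi (0 : ℝ), (psiErr t : ℂ) * Complex.exp (-σ * t) * fejer L (v - t) := by
  have hle : -L ≤ L := by linarith
  have h1 : ∀ w : ℝ, ((1 - |w| / L : ℝ) : ℂ) * Complex.exp (Complex.I * w * v) *
      psiErrLaplace (σ + Complex.I * w) = ∫ t in Ioi (0 : ℝ),
      ((1 - |w| / L : ℝ) : ℂ) * Complex.exp (Complex.I * w * (v - t)) *
        ((psiErr t : ℂ) * Complex.exp (-σ * t)) := by
    intro w
    rw [← laplace_psiErr (s := σ + Complex.I * w) (by simpa using hσ), ← integral_const_mul]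
    refine integral_congr_ae (Eventually.of_forall fun t => ?_)
    simp only
    rw [show -(σ + Complex.I * w) * t = -σ * t + -(Complex.I * w * t) by ring,
      show Complex.I * w * (v - t) = Complex.I * w * v + -(Complex.I * w * t) by ring,
      Complex.exp_add, Complex.exp_add]
    ring
  simp_rw [h1]
  rw [intervalIntegral.integral_of_le hle, integral_integral_swap]
  · refine integral_congr_ae ?_
    have hne : ∀ᵐ t ∂(volume.restrict (Ioi (0 : ℝ))), t ≠ v := by
      refine ae_restrict_of_ae ?_
      simp [ae_iff]
    filter_upwards [hne] with t ht
    rw [integral_mul_const, ← intervalIntegral.integral_of_le hle]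
    have := fejer_eq_integral hL (s := v - t) (sub_ne_zero.2 ht.symm)
    push_cast at this ⊢
    rw [this]
    ring
  · have hint : Integrable (fun z : ℝ × ℝ => (1 : ℝ) * Real.exp (-σ * z.2))
        ((volume.restrict (Ioc (-L) L)).prod (volume.restrict (Ioi 0))) := by
      refine Integrable.mul_prod (f := fun _ : ℝ => (1 : ℝ))
        (g := fun t : ℝ => Real.exp (-σ * t)) (integrable_const _) ?_
      exact integrableOn_exp_mul_Ioi (by linarith) 0
    have hpm := measurable_psiErr
    have hmeas : Measurable (fun z : ℝ × ℝ =>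
        ((1 - |z.1| / L : ℝ) : ℂ) * Complex.exp (Complex.I * z.1 * (v - z.2)) *
        ((psiErr z.2 : ℂ) * Complex.exp (-σ * z.2))) := by fun_prop
    refine (hint.const_mul (Real.log 4 + 5)).mono' hmeas.aestronglyMeasurable ?_
    have hmem : ∀ᵐ z ∂((volume.restrict (Ioc (-L) L)).prod (volume.restrict (Ioi (0 : ℝ)))),
        z.1 ∈ Ioc (-L) L := by
      rw [Measure.prod_restrict]
      filter_upwards [ae_restrict_mem (measurableSet_Ioc.prod measurableSet_Ioi)] with z hz
      exact hz.1
    filter_upwards [hmem] with z hz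
    have e1 : ‖Complex.exp (Complex.I * z.1 * (v - z.2))‖ = 1 := by
      rw [show Complex.I * z.1 * (v - z.2) = ((z.1 * (v - z.2) : ℝ) : ℂ) * Complex.I by
        push_cast; ring]
      exact Complex.norm_exp_ofReal_mul_I _
    have e2 : ‖Complex.exp (-σ * z.2)‖ = Real.exp (-σ * z.2) := by
      rw [Complex.norm_exp]; simp
    have e3 : |1 - |z.1| / L| ≤ 1 := by
      have : |z.1| ≤ L := abs_le.2 ⟨hz.1.le, hz.2⟩
      have h2 : |z.1| / L ≤ 1 := (div_le_one hL).2 this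
      have h3 : 0 ≤ |z.1| / L := by positivity
      rw [abs_le]; constructor <;> linarith
    simp only [Function.uncurry, norm_mul, Complex.norm_real, Real.norm_eq_abs, e1, e2, mul_one,
      one_mul]
    calc |1 - |z.1| / L| * (|psiErr z.2| * Real.exp (-σ * z.2))
        ≤ 1 * ((Real.log 4 + 5) * Real.exp (-σ * z.2)) := by
          gcongr
          exact abs_psiErr_le _
      _ = _ := one_mul _

/-- The Laplace transform being continuous up to the critical line, the smoothing identity
persists on that line. -/
lemma fejer_laplace {L : ℝ} (hL : 0 < L) (v : ℝ) :
    ∫ w in (-L)..L, ((1 - |w| / L : ℝ) : ℂ) * Complex.exp (Complex.I * w * v) *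
      psiErrLaplace (Complex.I * w) =
    ((∫ t in Ioi (0 : ℝ), psiErr t * fejer L (v - t) : ℝ) : ℂ) := by
  have hle : -L ≤ L := by linarith
  have hcont : ContinuousOn (fun p : ℝ × ℝ => psiErrLaplace (p.1 + Complex.I * p.2))
      {p | 0 ≤ p.1} := by
    refine continuousOn_psiErrLaplace.comp (by fun_prop) ?_
    intro p hp
    simpa using hp
  obtain ⟨C, hC⟩ := ((isCompact_Icc (a := (0 : ℝ)) (b := 1)).prod
    (isCompact_Icc (a := -L) (b := L))).exists_bound_of_continuousOn
    (hcont.mono fun p hp => hp.1.1)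
  have hlim1 : Tendsto (fun σ : ℝ => ∫ w in (-L)..L, ((1 - |w| / L : ℝ) : ℂ) *
      Complex.exp (Complex.I * w * v) * psiErrLaplace (σ + Complex.I * w)) (𝓝[>] 0)
      (𝓝 (∫ w in (-L)..L, ((1 - |w| / L : ℝ) : ℂ) * Complex.exp (Complex.I * w * v) *
      psiErrLaplace (Complex.I * w))) := by
    refine intervalIntegral.tendsto_integral_filter_of_dominated_convergence (fun _ => C) ?_ ?_
      (by simp) ?_
    · filter_upwards [self_mem_nhdsWithin] with σ hσ
      refine Continuous.aestronglyMeasurable ?_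
      refine Continuous.mul (by fun_prop) ?_
      refine hcont.comp_continuous (f := fun w : ℝ => (σ, w)) (by fun_prop) ?_
      intro w; exact (mem_Ioi.1 hσ).le
    · filter_upwards [Ioo_mem_nhdsGT (zero_lt_one' ℝ)] with σ hσ
      refine Eventually.of_forall fun w hw => ?_
      rw [uIoc_of_le hle] at hw
      have := hC (σ, w) ⟨⟨hσ.1.le, hσ.2.le⟩, ⟨hw.1.le, hw.2⟩⟩
      have e1 : ‖Complex.exp (Complex.I * w * v)‖ = 1 := by
        rw [show Complex.I * w * v = ((w * v : ℝ) : ℂ) * Complex.I by push_cast; ring]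
        exact Complex.norm_exp_ofReal_mul_I _
      have e3 : |1 - |w| / L| ≤ 1 := by
        have : |w| ≤ L := abs_le.2 ⟨hw.1.le, hw.2⟩
        have h2 : |w| / L ≤ 1 := (div_le_one hL).2 this
        have h3 : 0 ≤ |w| / L := by positivity
        rw [abs_le]; constructor <;> linarith
      rw [norm_mul, norm_mul, e1, mul_one, Complex.norm_real, Real.norm_eq_abs]
      calc _ ≤ 1 * C := by
            gcongr
        _ = C := one_mul C
    · refine Eventually.of_forall fun w _ => ?_
      refine Tendsto.const_mul _ ?_
      have h0 := hcont (0, w) (by simp)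
      have : Tendsto (fun σ : ℝ => (σ, w)) (𝓝[>] 0) (𝓝[{p : ℝ × ℝ | 0 ≤ p.1}] (0, w)) := by
        refine tendsto_nhdsWithin_iff.2 ⟨?_, ?_⟩
        · exact (Continuous.tendsto' (by fun_prop) _ _ rfl).mono_left nhdsWithin_le_nhds
        · filter_upwards [self_mem_nhdsWithin] with σ hσ
          exact (mem_Ioi.1 hσ).le
      simpa [Function.comp_def] using h0.tendsto.comp this
  have hfi : Integrable (fun t => fejer L (v - t)) (volume.restrict (Ioi 0)) :=
    ((integrable_fejer hL).comp_sub_left v).integrableOn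
  have hlim2 : Tendsto (fun σ : ℝ => ∫ t in Ioi (0 : ℝ), (psiErr t : ℂ) *
      Complex.exp (-σ * t) * fejer L (v - t)) (𝓝[>] 0)
      (𝓝 (∫ t in Ioi (0 : ℝ), ((psiErr t * fejer L (v - t) : ℝ) : ℂ))) := by
    have hpm := measurable_psiErr
    have hfm := (continuous_fejer L).measurable
    refine tendsto_integral_filter_of_dominated_convergence
      (fun t => (Real.log 4 + 5) * fejer L (v - t)) ?_ ?_ (hfi.const_mul _) ?_
    · refine Eventually.of_forall fun σ => Measurable.aestronglyMeasurable ?_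
      fun_prop
    · filter_upwards [self_mem_nhdsWithin] with σ hσ
      filter_upwards [ae_restrict_mem measurableSet_Ioi] with t ht
      have hf := fejer_nonneg hL.le (v - t)
      rw [norm_mul, norm_mul, Complex.norm_real, Complex.norm_real, Real.norm_of_nonneg hf,
        Complex.norm_exp]
      have : Real.exp (-(σ : ℂ) * t).re ≤ 1 := by
        rw [Real.exp_le_one_iff]
        simp
        exact mul_nonneg (mem_Ioi.1 hσ).le (mem_Ioi.1 ht).le
      have hp := abs_psiErr_le t
      rw [Real.norm_eq_abs]
      gcongr
      calc _ ≤ |psiErr t| * 1 := by gcongr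
        _ ≤ _ := by linarith
    · refine Eventually.of_forall fun t => ?_
      have : Tendsto (fun σ : ℝ => (psiErr t : ℂ) * Complex.exp (-σ * t) * fejer L (v - t))
          (𝓝 0) (𝓝 ((psiErr t : ℂ) * Complex.exp (-(0 : ℝ) * t) * fejer L (v - t))) :=
        Continuous.tendsto (by fun_prop) _
      simpa using this.mono_left nhdsWithin_le_nhds
  rw [← integral_complex_ofReal]
  refine tendsto_nhds_unique (hlim1.congr' ?_) hlim2
  filter_upwards [self_mem_nhdsWithin] with σ hσ
  exact fejer_laplace_aux hL v hσ

/-- The smoothed error tends to `0`: by `fejer_laplace` it is the Fourier transform of a compactly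
supported integrable function, so the Riemann–Lebesgue lemma applies. -/
lemma tendsto_fejer_psiErr {L : ℝ} (hL : 0 < L) :
    Tendsto (fun v : ℝ => ∫ t in Ioi (0 : ℝ), psiErr t * fejer L (v - t)) atTop (𝓝 0) := by
  have hle : -L ≤ L := by linarith
  have hRL := Real.tendsto_integral_exp_smul_cocompact
    ((Ioc (-L) L).indicator fun w : ℝ => ((1 - |w| / L : ℝ) : ℂ) * psiErrLaplace (Complex.I * w))
  have hcc : Tendsto (fun v : ℝ => -(v / (2 * Real.pi))) atTop (cocompact ℝ) := by
    refine Tendsto.mono_right ?_ atBot_le_cocompact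
    exact tendsto_neg_atTop_atBot.comp (tendsto_id.atTop_div_const (by positivity))
  have h := hRL.comp hcc
  have key : ∀ v : ℝ, (∫ w : ℝ, Real.fourierChar (-(w * -(v / (2 * Real.pi)))) •
      ((Ioc (-L) L).indicator fun w : ℝ => ((1 - |w| / L : ℝ) : ℂ) *
        psiErrLaplace (Complex.I * w)) w) =
      ((∫ t in Ioi (0 : ℝ), psiErr t * fejer L (v - t) : ℝ) : ℂ) := by
    intro v
    rw [← fejer_laplace hL v, intervalIntegral.integral_of_le hle,
      ← integral_indicator measurableSet_Ioc]
    congr 1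
    funext w
    by_cases hw : w ∈ Ioc (-L) L
    · simp only [indicator_of_mem hw, Circle.smul_def, Real.fourierChar_apply, smul_eq_mul]
      have : (((2 * Real.pi * -(w * -(v / (2 * Real.pi))) : ℝ)) : ℂ) * Complex.I =
          Complex.I * w * v := by
        have hpi : (Real.pi : ℂ) ≠ 0 := by exact_mod_cast Real.pi_ne_zero
        push_cast
        field_simp
      rw [this]
      ring
    · simp [indicator_of_notMem hw]
  have h' : Tendsto (fun v : ℝ => ((∫ t in Ioi (0 : ℝ), psiErr t * fejer L (v - t) : ℝ) : ℂ))
      atTop (𝓝 0) := h.congr key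
  simpa [Function.comp_def] using (Complex.continuous_re.tendsto 0).comp h'

/-! ### The prime number theorem -/

/-- `t ↦ ψ(eᵗ)` is monotone, so `ψ(eᵗ) e⁻ᵗ` cannot drop faster than `e⁻ᵗ`. -/
lemma psiErr_slow {s t : ℝ} (h : s ≤ t) :
    (psiErr s + 1) * Real.exp (-(t - s)) ≤ psiErr t + 1 := by
  have := Chebyshev.psi_mono (Real.exp_le_exp.2 h)
  simp only [psiErr, sub_add_cancel]
  rw [mul_assoc, ← Real.exp_add, show -s + -(t - s) = -t by ring]
  gcongr

lemma psiErr_add_one_nonneg (t : ℝ) : 0 ≤ psiErr t + 1 := by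
  have := Chebyshev.psi_nonneg (Real.exp t)
  simp only [psiErr, sub_add_cancel]
  positivity

/-- Tauberian step: the kernel has all but a proportion `δ` of its mass in a window of radius `δ`,
on which `psiErr + 1` varies by a factor at most `e^{2δ}` in the unfavourable direction
(`psiErr_slow`), so the vanishing of the smoothed error bounds `psiErr` pointwise. -/
lemma psiErr_bounds {δ : ℝ} (hδ : 0 < δ) (hδ1 : δ < 1) :
    ∀ᶠ t in atTop, psiErr t + 1 ≤ Real.exp (2 * δ) * ((1 + δ) / (1 - δ)) ∧
      Real.exp (-(2 * δ)) * (1 - 2 * δ - (Real.log 4 + 6) * δ) ≤ psiErr t + 1 := by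
  set M := ∫ s, fejer 1 s with hM
  have hMpos : 0 < M := integral_fejer_one_pos
  obtain ⟨T, hT0, hT⟩ : ∃ T : ℝ, 0 < T ∧ (1 - δ) * M ≤ ∫ s in (-T)..T, fejer 1 s := by
    have := intervalIntegral_tendsto_integral integrable_fejer_one tendsto_neg_atTop_atBot
      tendsto_id
    have hlt : (1 - δ) * M < M := by nlinarith
    obtain ⟨T, h1, h2⟩ := ((this.eventually_const_lt hlt).and (eventually_gt_atTop 0)).exists
    exact ⟨T, h2, h1.le⟩
  set L := T / δ with hLdef
  have hL : 0 < L := by positivity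
  have htot : ∀ v : ℝ, ∫ t, fejer L (v - t) = M := by
    intro v
    rw [integral_sub_left_eq_self (fun t => fejer L t) volume v]
    simp_rw [fejer_scale L]
    rw [integral_const_mul, Measure.integral_comp_mul_left (fejer 1) L, abs_of_pos (by positivity),
      smul_eq_mul, ← mul_assoc, mul_inv_cancel₀ hL.ne', one_mul]
  -- the mass of the kernel in the window of radius `δ = T / L`
  have hwin : ∀ v : ℝ, (1 - δ) * M ≤ ∫ t in Ioc (v - δ) (v + δ), fejer L (v - t) := by
    intro v
    rw [← intervalIntegral.integral_of_le (by linarith),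
      intervalIntegral.integral_comp_sub_left (fun t => fejer L t) v]
    simp_rw [fejer_scale L]
    rw [intervalIntegral.integral_const_mul,
      intervalIntegral.mul_integral_comp_mul_left (f := fejer 1)]
    rw [show L * (v - (v + δ)) = -T by rw [hLdef]; field_simp; ring,
      show L * (v - (v - δ)) = T by rw [hLdef]; field_simp; ring]
    exact hT
  have hint : ∀ v : ℝ, Integrable (fun t => fejer L (v - t)) :=
    fun v => (integrable_fejer hL).comp_sub_left v
  have hbint : ∀ v : ℝ, Integrable (fun t => psiErr t * fejer L (v - t)) := by
    intro v
    refine (hint v).bdd_mul (c := Real.log 4 + 5) measurable_psiErr.aestronglyMeasurable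
      (Eventually.of_forall fun t => ?_)
    simpa using abs_psiErr_le t
  have haint : ∀ v : ℝ, Integrable (fun t => (psiErr t + 1) * fejer L (v - t)) := by
    intro v
    refine ((hbint v).add (hint v)).congr (Eventually.of_forall fun t => ?_)
    simp; ring
  have hnn : ∀ v t : ℝ, 0 ≤ fejer L (v - t) := fun v t => fejer_nonneg hL.le _
  have hE : ∀ᶠ v in atTop, |∫ t in Ioi (0 : ℝ), psiErr t * fejer L (v - t)| < δ * M := by
    have := (tendsto_fejer_psiErr hL).abs
    rw [abs_zero] at this
    exact this.eventually_lt_const (by positivity)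
  have main : ∀ᶠ v in atTop, psiErr (v - δ) + 1 ≤ Real.exp (2 * δ) * ((1 + δ) / (1 - δ)) ∧
      Real.exp (-(2 * δ)) * (1 - 2 * δ - (Real.log 4 + 6) * δ) ≤ psiErr (v + δ) + 1 := by
    filter_upwards [hE, eventually_gt_atTop δ] with v hv hvδ
    set W := Ioc (v - δ) (v + δ) with hW
    have hWm : MeasurableSet W := measurableSet_Ioc
    have hsub : W ⊆ Ioi 0 := fun t ht => by
      have := ht.1
      rw [mem_Ioi]; linarith
    have hP := hwin v
    set P := ∫ t in W, fejer L (v - t) with hPdef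
    set Q := ∫ t in Ioi (0 : ℝ), fejer L (v - t) with hQdef
    have hQM : Q ≤ M := by
      rw [← htot v]
      exact setIntegral_le_integral (hint v) (Eventually.of_forall fun t => hnn v t)
    have hPQ : P ≤ Q := setIntegral_mono_set (hint v).integrableOn
      (Eventually.of_forall fun t => hnn v t) (Eventually.of_forall hsub)
    have hI : ∫ t in Ioi (0 : ℝ), (psiErr t + 1) * fejer L (v - t) =
        (∫ t in Ioi (0 : ℝ), psiErr t * fejer L (v - t)) + Q := by
      rw [hQdef, ← integral_add (hbint v).integrableOn (hint v).integrableOn]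
      congr 1
      funext t
      ring
    rw [abs_lt] at hv
    constructor
    -- upper bound: on the window `psiErr t + 1` is at least a multiple of its value at `v - δ`
    · have h1 : (psiErr (v - δ) + 1) * Real.exp (-(2 * δ)) * P ≤
          ∫ t in Ioi (0 : ℝ), (psiErr t + 1) * fejer L (v - t) := by
        calc _ = ∫ t in W, (psiErr (v - δ) + 1) * Real.exp (-(2 * δ)) * fejer L (v - t) := by
              rw [integral_const_mul]
          _ ≤ ∫ t in W, (psiErr t + 1) * fejer L (v - t) := by
              refine setIntegral_mono_on ((hint v).const_mul _).integrableOn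
                (haint v).integrableOn hWm fun t ht => ?_
              refine mul_le_mul_of_nonneg_right ?_ (hnn v t)
              refine le_trans ?_ (psiErr_slow ht.1.le)
              refine mul_le_mul_of_nonneg_left ?_ (psiErr_add_one_nonneg _)
              rw [Real.exp_le_exp]
              linarith [ht.2]
          _ ≤ _ := setIntegral_mono_set (haint v).integrableOn
              (Eventually.of_forall fun t => mul_nonneg (psiErr_add_one_nonneg t) (hnn v t))
              (Eventually.of_forall hsub)
      have h2 : (psiErr (v - δ) + 1) * Real.exp (-(2 * δ)) * ((1 - δ) * M) ≤ (1 + δ) * M := by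
        have h0 : 0 ≤ (psiErr (v - δ) + 1) * Real.exp (-(2 * δ)) :=
          mul_nonneg (psiErr_add_one_nonneg _) (Real.exp_pos _).le
        have := mul_le_mul_of_nonneg_left hP h0
        linarith
      have h3 : (psiErr (v - δ) + 1) * Real.exp (-(2 * δ)) * (1 - δ) ≤ 1 + δ := by
        refine le_of_mul_le_mul_right ?_ hMpos
        linarith
      rw [Real.exp_neg] at h3
      have he := Real.exp_pos (2 * δ)
      rw [← mul_div_assoc, le_div_iff₀ (by linarith)]
      field_simp at h3
      rw [mul_comm δ 2] at h3
      linarith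
    -- lower bound: on the window `psiErr t + 1` is at most a multiple of its value at `v + δ`,
    -- and outside the window it is bounded while the kernel has small mass
    · have hsplit : ∫ t in Ioi (0 : ℝ), (psiErr t + 1) * fejer L (v - t) =
          (∫ t in W, (psiErr t + 1) * fejer L (v - t)) +
          ∫ t in Ioi 0 \ W, (psiErr t + 1) * fejer L (v - t) := by
        rw [← setIntegral_union disjoint_sdiff_right (measurableSet_Ioi.diff hWm)
          (haint v).integrableOn (haint v).integrableOn, union_sdiff_cancel hsub]
      have hsplitQ : Q = P + ∫ t in Ioi 0 \ W, fejer L (v - t) := by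
        rw [← setIntegral_union disjoint_sdiff_right (measurableSet_Ioi.diff hWm)
          (hint v).integrableOn (hint v).integrableOn, union_sdiff_cancel hsub]
      have h1 : ∫ t in W, (psiErr t + 1) * fejer L (v - t) ≤
          (psiErr (v + δ) + 1) * Real.exp (2 * δ) * P := by
        rw [hPdef, ← integral_const_mul]
        refine setIntegral_mono_on (haint v).integrableOn
          ((hint v).const_mul _).integrableOn hWm fun t ht => ?_
        refine mul_le_mul_of_nonneg_right ?_ (hnn v t)
        have h := psiErr_slow ht.2
        have h' : psiErr t + 1 ≤ (psiErr (v + δ) + 1) * Real.exp (v + δ - t) := by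
          rw [Real.exp_neg, ← div_eq_mul_inv, div_le_iff₀ (Real.exp_pos _)] at h
          exact h
        refine h'.trans (mul_le_mul_of_nonneg_left ?_ (psiErr_add_one_nonneg _))
        rw [Real.exp_le_exp]
        linarith [ht.1]
      have h2 : ∫ t in Ioi 0 \ W, (psiErr t + 1) * fejer L (v - t) ≤
          (Real.log 4 + 6) * (Q - P) := by
        rw [hsplitQ, add_sub_cancel_left, ← integral_const_mul]
        refine setIntegral_mono_on (haint v).integrableOn
          ((hint v).const_mul _).integrableOn (measurableSet_Ioi.diff hWm) fun t ht => ?_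
        refine mul_le_mul_of_nonneg_right ?_ (hnn v t)
        linarith [le_abs_self (psiErr t), abs_psiErr_le t]
      have h4 : 0 ≤ Real.log 4 := Real.log_nonneg (by norm_num)
      have h5 : (Real.log 4 + 6) * (Q - P) ≤ (Real.log 4 + 6) * (δ * M) := by
        gcongr; linarith
      have h6 : (psiErr (v + δ) + 1) * Real.exp (2 * δ) * P ≤
          (psiErr (v + δ) + 1) * Real.exp (2 * δ) * M :=
        mul_le_mul_of_nonneg_left (hPQ.trans hQM)
          (mul_nonneg (psiErr_add_one_nonneg _) (Real.exp_pos _).le)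
      have h7 : 1 - 2 * δ - (Real.log 4 + 6) * δ ≤
          (psiErr (v + δ) + 1) * Real.exp (2 * δ) := by
        refine le_of_mul_le_mul_right ?_ hMpos
        linarith
      rw [Real.exp_neg, inv_mul_le_iff₀ (Real.exp_pos _)]
      linarith
  have hm1 := tendsto_atTop_add_const_right atTop δ (tendsto_id (α := ℝ)) |>.eventually main
  have hm2 := tendsto_atTop_add_const_right atTop (-δ) (tendsto_id (α := ℝ)) |>.eventually main
  filter_upwards [hm1, hm2] with t h1 h2
  constructor
  · have := h1.1; simpa using this
  · have := h2.2; simpa using this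

lemma tendsto_psiErr : Tendsto psiErr atTop (𝓝 0) := by
  rw [tendsto_order]
  constructor
  · intro a ha
    have : Tendsto (fun δ : ℝ => Real.exp (-(2 * δ)) * (1 - 2 * δ - (Real.log 4 + 6) * δ))
        (𝓝[>] 0) (𝓝 1) := by
      refine (Continuous.tendsto' (by fun_prop) _ _ ?_).mono_left nhdsWithin_le_nhds
      simp
    obtain ⟨δ, h1, h2⟩ := ((this.eventually_const_lt (show a + 1 < 1 by linarith)).and
      (Ioo_mem_nhdsGT zero_lt_one)).exists
    filter_upwards [psiErr_bounds h2.1 h2.2] with t ht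
    linarith [ht.2]
  · intro a ha
    have : Tendsto (fun δ : ℝ => Real.exp (2 * δ) * ((1 + δ) / (1 - δ)))
        (𝓝[>] 0) (𝓝 1) := by
      have h : ContinuousAt (fun δ : ℝ => Real.exp (2 * δ) * ((1 + δ) / (1 - δ))) 0 := by
        refine ContinuousAt.mul (by fun_prop) (ContinuousAt.div (by fun_prop) (by fun_prop) ?_)
        norm_num
      have h' := h.tendsto
      simp only [mul_zero, Real.exp_zero, add_zero, sub_zero, div_one, mul_one] at h'
      exact h'.mono_left nhdsWithin_le_nhds
    obtain ⟨δ, h1, h2⟩ := ((this.eventually_lt_const (show 1 < a + 1 by linarith)).and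
      (Ioo_mem_nhdsGT zero_lt_one)).exists
    filter_upwards [psiErr_bounds h2.1 h2.2] with t ht
    linarith [ht.1]

/-- The prime number theorem `ψ(x) ~ x`. -/
lemma psi_asymp {ε : ℝ} (hε : 0 < ε) : ∀ᶠ x in atTop, |Chebyshev.psi x - x| ≤ ε * x := by
  have h := (tendsto_psiErr.comp Real.tendsto_log_atTop).abs
  rw [abs_zero] at h
  filter_upwards [h.eventually_lt_const hε, eventually_gt_atTop 0] with x hx hx0
  simp only [Function.comp, psiErr, Real.exp_log hx0, Real.exp_neg] at hx
  have : Chebyshev.psi x - x = (Chebyshev.psi x * x⁻¹ - 1) * x := by field_simp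
  rw [this, abs_mul, abs_of_pos hx0]
  gcongr

/-- The prime number theorem `θ(x) ~ x`, as prime powers contribute `O(√x)` to `ψ`. -/
lemma theta_asymp {ε : ℝ} (hε : 0 < ε) : ∀ᶠ x in atTop, |Chebyshev.theta x - x| ≤ ε * x := by
  obtain ⟨C, hC⟩ := Chebyshev.psi_sub_theta_le_mul_sqrt
  have hs : ∀ᶠ x : ℝ in atTop, 2 * C / ε ≤ √x :=
    Real.tendsto_sqrt_atTop.eventually (eventually_ge_atTop _)
  filter_upwards [psi_asymp (half_pos hε), hs, eventually_gt_atTop 0] with x h1 h2 hx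
  have h3 := hC x
  have h4 := Chebyshev.theta_le_psi x
  have h5 : C * √x ≤ ε / 2 * x := by
    rw [div_le_iff₀ hε] at h2
    have hsq := Real.mul_self_sqrt hx.le
    nlinarith [Real.sqrt_nonneg x]
  rw [abs_le] at h1 ⊢
  constructor <;> linarith

/-! ### Rough numbers and partial summation -/

open Classical in
/-- The indicator function of the `z`-rough positive integers, those without prime factors `< z`.
Its value at `0` is `0`, as for any arithmetic function. -/
noncomputable def rough (z : ℝ) : ArithmeticFunction ℝ where
  toFun n := if n ≠ 0 ∧ ∀ p : ℕ, p.Prime → p ∣ n → z ≤ p then 1 else 0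
  map_zero' := by simp

open Classical in
lemma rough_apply (z : ℝ) (n : ℕ) :
    rough z n = if n ≠ 0 ∧ ∀ p : ℕ, p.Prime → p ∣ n → z ≤ p then 1 else 0 := rfl

lemma rough_nonneg (z : ℝ) (n : ℕ) : 0 ≤ rough z n := by
  rw [rough_apply]; split_ifs <;> norm_num

lemma rough_le_one (z : ℝ) (n : ℕ) : rough z n ≤ 1 := by
  rw [rough_apply]; split_ifs <;> norm_num

lemma rough_one (z : ℝ) : rough z 1 = 1 := by
  rw [rough_apply, if_pos]
  exact ⟨one_ne_zero, fun p hp h => absurd (Nat.dvd_one.1 h) hp.one_lt.ne'⟩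

/-- Complete multiplicativity. -/
lemma rough_mul (z : ℝ) (m n : ℕ) : rough z (m * n) = rough z m * rough z n := by
  classical
  simp only [rough_apply, ite_zero_mul_ite_zero, mul_one]
  refine if_congr ?_ rfl rfl
  simp only [ne_eq, mul_eq_zero, not_or]
  constructor
  · rintro ⟨⟨hm, hn⟩, h⟩
    exact ⟨⟨hm, fun p hp hd => h p hp (hd.mul_right n)⟩,
      ⟨hn, fun p hp hd => h p hp (hd.mul_left m)⟩⟩
  · rintro ⟨⟨hm, h1⟩, ⟨hn, h2⟩⟩
    refine ⟨⟨hm, hn⟩, fun p hp hd => ?_⟩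
    rcases hp.dvd_mul.1 hd with h | h
    exacts [h1 p hp h, h2 p hp h]

/-- A rough number other than `1` is at least `z`. -/
lemma rough_eq_zero {z : ℝ} {n : ℕ} (h1 : n ≠ 1) (hn : (n : ℝ) < z) : rough z n = 0 := by
  rw [rough_apply, if_neg]
  rintro ⟨h0, h⟩
  have := h n.minFac (Nat.minFac_prime h1) n.minFac_dvd
  have h2 : (n.minFac : ℝ) ≤ n := by exact_mod_cast Nat.minFac_le (Nat.pos_of_ne_zero h0)
  linarith

lemma rough_prime {z : ℝ} {n : ℕ} (hn : n.Prime) (h : z ≤ n) : rough z n = 1 := by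
  rw [rough_apply, if_pos]
  refine ⟨hn.ne_zero, fun p hp hd => ?_⟩
  rwa [(Nat.prime_dvd_prime_iff_eq hp hn).1 hd]

/-- The number `Φ(x, z)` of `z`-rough positive integers up to `x`. -/
noncomputable def roughCount (z x : ℝ) : ℝ := ∑ n ∈ Finset.Ioc 0 ⌊x⌋₊, rough z n

/-- The sum of reciprocals of the `z`-rough positive integers up to `x`. -/
noncomputable def roughRecip (z x : ℝ) : ℝ := ∑ n ∈ Finset.Ioc 0 ⌊x⌋₊, rough z n / n

/-- The Chebyshev function `ψ` restricted to `z`-rough integers, that is the sum `R(x)` of `Λ(n)`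
over the `z`-rough `n ≤ x`. -/
noncomputable def roughPsi (z x : ℝ) : ℝ :=
  ∑ n ∈ Finset.Ioc 0 ⌊x⌋₊, rough z n * ArithmeticFunction.vonMangoldt n

/-- With `r` the indicator function of rough numbers, `∑ r(n) log n = ∑ r(m) R(x/m)` over
`n, m ≤ x`, from `log = Λ * 1` and complete multiplicativity of `r`. -/
lemma sum_rough_log (z x : ℝ) :
    ∑ n ∈ Finset.Ioc 0 ⌊x⌋₊, rough z n * Real.log n =
      ∑ n ∈ Finset.Ioc 0 ⌊x⌋₊, rough z n * roughPsi z (x / n) := by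
  have h := ArithmeticFunction.sum_Ioc_mul_eq_sum_sum (rough z)
    ((rough z).pmul ArithmeticFunction.vonMangoldt) ⌊x⌋₊
  simp only [ArithmeticFunction.pmul_apply] at h
  simp only [roughPsi, Nat.floor_div_natCast]
  rw [← h]
  refine Finset.sum_congr rfl fun n _ => ?_
  rw [ArithmeticFunction.mul_apply, ← ArithmeticFunction.vonMangoldt_sum, Finset.mul_sum,
    ← Nat.sum_divisorsAntidiagonal'
      (f := fun _ b => rough z n * ArithmeticFunction.vonMangoldt b)]
  refine Finset.sum_congr rfl fun p hp => ?_
  rw [ArithmeticFunction.pmul_apply, ← (Nat.mem_divisorsAntidiagonal.1 hp).1, rough_mul]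
  ring

lemma roughPsi_nonneg (z y : ℝ) : 0 ≤ roughPsi z y :=
  Finset.sum_nonneg fun n _ =>
    mul_nonneg (rough_nonneg z n) ArithmeticFunction.vonMangoldt_nonneg

lemma roughPsi_le_psi (z y : ℝ) : roughPsi z y ≤ Chebyshev.psi y := by
  refine Finset.sum_le_sum fun n _ => ?_
  exact mul_le_of_le_one_left ArithmeticFunction.vonMangoldt_nonneg (rough_le_one z n)

lemma roughPsi_eq_zero {z y : ℝ} (h : y < z) : roughPsi z y = 0 := by
  refine Finset.sum_eq_zero fun n hn => ?_
  rw [Finset.mem_Ioc] at hn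
  rcases eq_or_ne n 1 with rfl | h1
  · simp
  · rw [rough_eq_zero h1, zero_mul]
    exact ((Nat.le_floor_iff' hn.1.ne').1 hn.2).trans_lt h

/-- `θ` at a smaller argument, as a sum over the longer range. -/
lemma theta_eq_sum {y w : ℝ} (h : w ≤ y) : Chebyshev.theta w =
    ∑ n ∈ Finset.Ioc 0 ⌊y⌋₊, if n.Prime ∧ n ≤ ⌊w⌋₊ then Real.log n else 0 := by
  rw [Chebyshev.theta, ← Finset.sum_filter]
  refine Finset.sum_congr ?_ fun _ _ => rfl
  ext n
  simp only [Finset.mem_filter, Finset.mem_Ioc]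
  have := Nat.floor_le_floor h
  constructor
  · rintro ⟨⟨h1, h2⟩, h3⟩; exact ⟨⟨h1, by omega⟩, h3, h2⟩
  · rintro ⟨⟨h1, h2⟩, h3, h4⟩; exact ⟨⟨h1, h4⟩, h3⟩

/-- The primes in `(z, y]` are rough. -/
lemma theta_sub_le_roughPsi {z y : ℝ} (h : z ≤ y) :
    Chebyshev.theta y - Chebyshev.theta z ≤ roughPsi z y := by
  rw [theta_eq_sum h, theta_eq_sum le_rfl, ← Finset.sum_sub_distrib]
  refine Finset.sum_le_sum fun n hn => ?_
  have h0 : 0 ≤ rough z n * ArithmeticFunction.vonMangoldt n :=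
    mul_nonneg (rough_nonneg z n) ArithmeticFunction.vonMangoldt_nonneg
  have hl : 0 ≤ Real.log n := Real.log_natCast_nonneg n
  by_cases hp : n.Prime
  · by_cases hz : n ≤ ⌊z⌋₊
    · split_ifs <;> first | linarith | tauto
    · have : rough z n = 1 := rough_prime hp (Nat.lt_of_floor_lt (not_le.1 hz)).le
      rw [this, one_mul, ArithmeticFunction.vonMangoldt_apply_prime hp]
      split_ifs <;> linarith
  · simpa [hp] using h0

/-- The primes up to `z - 1` are not rough. -/
lemma roughPsi_le {z y : ℝ} (hz : 1 ≤ z) (h : z ≤ y) :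
    roughPsi z y ≤ Chebyshev.psi y - Chebyshev.theta (z - 1) := by
  rw [theta_eq_sum (show z - 1 ≤ y by linarith), Chebyshev.psi, ← Finset.sum_sub_distrib]
  refine Finset.sum_le_sum fun n hn => ?_
  have hΛ : 0 ≤ ArithmeticFunction.vonMangoldt n := ArithmeticFunction.vonMangoldt_nonneg
  have h0 : rough z n * ArithmeticFunction.vonMangoldt n ≤ ArithmeticFunction.vonMangoldt n :=
    mul_le_of_le_one_left hΛ (rough_le_one z n)
  split_ifs with hc
  · have : (n : ℝ) ≤ z - 1 := (Nat.le_floor_iff (by linarith)).1 hc.2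
    rw [rough_eq_zero hc.1.ne_one (by linarith), ArithmeticFunction.vonMangoldt_apply_prime hc.1]
    simp
  · simpa using h0

/-- By the prime number theorem, `R(y) = y - z + o(y)` uniformly for `y ≥ z`. -/
lemma roughPsi_asymp {ε : ℝ} (hε : 0 < ε) :
    ∃ z₀ : ℝ, ∀ z, z₀ ≤ z → ∀ y, z ≤ y → |roughPsi z y - (y - z)| ≤ ε * y := by
  have hε3 : 0 < ε / 3 := by positivity
  obtain ⟨a, ha⟩ := ((psi_asymp hε3).and (theta_asymp hε3)).exists_forall_of_atTop
  refine ⟨max (a + 1) (max 1 (3 / ε)), fun z hz y hy => ?_⟩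
  simp only [max_le_iff] at hz
  obtain ⟨hza, hz1, hzε⟩ := hz
  rw [div_le_iff₀ hε] at hzε
  have h1 := (ha y (by linarith)).1
  have h2 := (ha y (by linarith)).2
  have h3 := (ha z (by linarith)).2
  have h4 := (ha (z - 1) (by linarith)).2
  have h5 := theta_sub_le_roughPsi hy
  have h6 := roughPsi_le hz1 hy
  rw [abs_le] at h1 h2 h3 h4 ⊢
  have h7 : ε * z ≤ ε * y := by gcongr
  constructor <;> linarith

lemma roughCount_mono (z : ℝ) : Monotone (roughCount z) := fun _ _ h =>
  Finset.sum_le_sum_of_subset_of_nonneg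
    (Finset.Ioc_subset_Ioc_right (Nat.floor_le_floor h)) fun n _ _ => rough_nonneg z n

lemma roughCount_nonneg (z x : ℝ) : 0 ≤ roughCount z x :=
  Finset.sum_nonneg fun n _ => rough_nonneg z n

lemma roughCount_eq_one {z x : ℝ} (h1 : 1 ≤ x) (h : x < z) : roughCount z x = 1 := by
  rw [roughCount, Finset.sum_eq_single_of_mem 1, rough_one]
  · rw [Finset.mem_Ioc]; exact ⟨one_pos, Nat.le_floor (by simpa using h1)⟩
  · intro n hn h1
    rw [Finset.mem_Ioc] at hn
    exact rough_eq_zero h1 (((Nat.le_floor_iff' hn.1.ne').1 hn.2).trans_lt h)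

lemma intervalIntegrable_inv_sq {a b : ℝ} (ha : 0 < a) (hb : 0 < b) :
    IntervalIntegrable (fun t : ℝ => 1 / t ^ 2) volume a b := by
  refine ContinuousOn.intervalIntegrable fun t ht => ?_
  have : 0 < t := lt_of_lt_of_le (lt_min ha hb) ht.1
  exact ContinuousAt.continuousWithinAt (by fun_prop (disch := positivity))

lemma intervalIntegrable_inv' {a b : ℝ} (ha : 0 < a) (hb : 0 < b) :
    IntervalIntegrable (fun t : ℝ => 1 / t) volume a b := by
  refine ContinuousOn.intervalIntegrable fun t ht => ?_
  have : 0 < t := lt_of_lt_of_le (lt_min ha hb) ht.1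
  exact ContinuousAt.continuousWithinAt (by fun_prop (disch := positivity))

lemma intervalIntegrable_roughCount (z : ℝ) {a b : ℝ} (ha : 0 < a) (hb : 0 < b) :
    IntervalIntegrable (fun t : ℝ => roughCount z t / t ^ 2) volume a b := by
  have h := ((roughCount_mono z).intervalIntegrable (μ := volume) (a := a) (b := b)).mul_continuousOn
    (g := fun t : ℝ => 1 / t ^ 2) fun t ht => by
      have : 0 < t := lt_of_lt_of_le (lt_min ha hb) ht.1
      exact ContinuousAt.continuousWithinAt (by fun_prop (disch := positivity))
  simpa [div_eq_mul_inv] using h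

lemma integral_inv_sq' {a b : ℝ} (ha : 0 < a) (hb : 0 < b) :
    ∫ t in a..b, 1 / t ^ 2 = 1 / a - 1 / b := by
  have h := intervalIntegral.integral_eq_sub_of_hasDerivAt (a := a) (b := b)
    (f := fun t : ℝ => -(1 / t)) (f' := fun t => 1 / t ^ 2) (fun t ht => ?_)
    (intervalIntegrable_inv_sq ha hb)
  · rw [h]; ring
  · have : 0 < t := lt_of_lt_of_le (lt_min ha hb) ht.1
    have := (hasDerivAt_inv this.ne').fun_neg
    simpa [one_div] using this

/-- Partial summation over rough numbers. -/
lemma sum_rough_abel (z A B : ℝ) {Y : ℝ} (hY : 1 ≤ Y) :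
    ∑ n ∈ Finset.Ioc 0 ⌊Y⌋₊, rough z n * (A / n - B) =
      (A / Y - B) * roughCount z Y + A * ∫ t in (1 : ℝ)..Y, roughCount z t / t ^ 2 := by
  have hd : ∀ t : ℝ, 0 < t → HasDerivAt (fun t : ℝ => A / t - B) (-A / t ^ 2) t := fun t ht => by
    have := ((hasDerivAt_inv ht.ne').const_mul A).sub_const B
    simpa [div_eq_mul_inv] using this
  have hIcc : ∀ N : ℕ, ∀ f : ℕ → ℝ, f 0 = 0 →
      ∑ n ∈ Finset.Icc 0 N, f n = ∑ n ∈ Finset.Ioc 0 N, f n := fun N f hf => by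
    rw [← Finset.add_sum_Ioc_eq_sum_Icc (Nat.zero_le N), hf, zero_add]
  have h := sum_mul_eq_sub_integral_mul₀ (c := fun n => rough z n) (f := fun t : ℝ => A / t - B)
    (by simp) Y (fun t ht => (hd t (by linarith [ht.1])).differentiableAt) ?_
  · rw [hIcc _ _ (by simp), hIcc _ _ (by simp)] at h
    have e : ∫ t in Ioc 1 Y, deriv (fun t : ℝ => A / t - B) t *
        ∑ k ∈ Finset.Icc 0 ⌊t⌋₊, rough z k =
        - (A * ∫ t in (1 : ℝ)..Y, roughCount z t / t ^ 2) := by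
      rw [intervalIntegral.integral_of_le hY, ← integral_const_mul, ← integral_neg]
      refine setIntegral_congr_fun measurableSet_Ioc fun t ht => ?_
      rw [(hd t (by linarith [ht.1])).deriv, hIcc _ _ (by simp), roughCount]
      ring
    rw [e, sub_neg_eq_add] at h
    rw [roughCount, ← h]
    exact Finset.sum_congr rfl fun n _ => mul_comm _ _
  · refine ContinuousOn.integrableOn_Icc ?_
    refine ContinuousOn.congr (f := fun t : ℝ => -A / t ^ 2) (fun t ht => ?_)
      fun t ht => (hd t (by linarith [ht.1])).deriv
    have : 0 < t := by linarith [ht.1]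
    exact ContinuousAt.continuousWithinAt (by fun_prop (disch := positivity))

/-! ### The approximate Buchstab identity -/

lemma roughRecip_nonneg (z x : ℝ) : 0 ≤ roughRecip z x :=
  Finset.sum_nonneg fun n _ => div_nonneg (rough_nonneg z n) (Nat.cast_nonneg n)

lemma roughRecip_mono (z : ℝ) : Monotone (roughRecip z) := fun _ _ h =>
  Finset.sum_le_sum_of_subset_of_nonneg
    (Finset.Ioc_subset_Ioc_right (Nat.floor_le_floor h)) fun n _ _ =>
      div_nonneg (rough_nonneg z n) (Nat.cast_nonneg n)

lemma one_le_log {z : ℝ} (hz : Real.exp 1 ≤ z) : 1 ≤ Real.log z :=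
  (Real.le_log_iff_exp_le ((Real.exp_pos 1).trans_le hz)).2 hz

lemma one_lt_of_exp_le {z : ℝ} (hz : Real.exp 1 ≤ z) : 1 < z := by
  linarith [Real.add_one_lt_exp (one_ne_zero (α := ℝ))]

lemma log_le_of_le_pow {z Y : ℝ} {K : ℕ} (hY : 0 < Y) (hYK : Y ≤ z ^ K) :
    Real.log Y ≤ K * Real.log z := by
  rw [← Real.log_pow]
  exact Real.log_le_log hY hYK

/-- A linear bound for the count gives a bounded sum of reciprocals, by partial summation: the
term `B t / log z` contributes `B log Y / log z ≤ B K` to the integral. -/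
lemma roughRecip_le {z B Y : ℝ} {K : ℕ} (hz : Real.exp 1 ≤ z) (hB : 0 ≤ B)
    (hY : 1 ≤ Y) (hYK : Y ≤ z ^ K)
    (h : ∀ t, 1 ≤ t → t ≤ z ^ K → roughCount z t ≤ 1 + B * t / Real.log z) :
    roughRecip z Y ≤ 2 + B + B * K := by
  have hL := one_le_log hz
  have hY0 : 0 < Y := by linarith
  have h1 : roughRecip z Y = 1 / Y * roughCount z Y +
      ∫ t in (1 : ℝ)..Y, roughCount z t / t ^ 2 := by
    have := sum_rough_abel z 1 0 hY
    simp only [sub_zero, one_mul] at this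
    rw [← this, roughRecip]
    exact Finset.sum_congr rfl fun n _ => by ring
  have h2 : 1 / Y * roughCount z Y ≤ 1 + B := by
    have h3 := h Y hY hYK
    have h4 : B * Y / Real.log z ≤ B * Y := div_le_self (by positivity) hL
    rw [one_div_mul_eq_div, div_le_iff₀ hY0]
    nlinarith
  have h5 : ∫ t in (1 : ℝ)..Y, roughCount z t / t ^ 2 ≤
      ∫ t in (1 : ℝ)..Y, (1 / t ^ 2 + B / Real.log z * (1 / t)) := by
    refine intervalIntegral.integral_mono_on hY (intervalIntegrable_roughCount z one_pos hY0)
      ((intervalIntegrable_inv_sq one_pos hY0).add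
        ((intervalIntegrable_inv' one_pos hY0).const_mul _)) fun t ht => ?_
    have ht0 : 0 < t := by linarith [ht.1]
    calc roughCount z t / t ^ 2 ≤ (1 + B * t / Real.log z) / t ^ 2 := by
          gcongr
          exact h t ht.1 (ht.2.trans hYK)
      _ = _ := by field_simp
  rw [intervalIntegral.integral_add (intervalIntegrable_inv_sq one_pos hY0)
        ((intervalIntegrable_inv' one_pos hY0).const_mul _), intervalIntegral.integral_const_mul,
    integral_inv_sq' one_pos hY0, integral_one_div_of_pos one_pos hY0, div_one] at h5
  have h6 : B / Real.log z * Real.log Y ≤ B * K := by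
    rw [div_mul_eq_mul_div, div_le_iff₀ (by linarith), mul_assoc]
    exact mul_le_mul_of_nonneg_left (log_le_of_le_pow hY0 hYK) hB
  have : 0 ≤ 1 / Y := by positivity
  simp only [div_one] at h5
  linarith

/-- Only `m ≤ x / z` contribute to the sum of `r(m) R(x/m)`. -/
lemma sum_roughPsi_eq {z x : ℝ} (hz : 1 ≤ z) (hx : 0 ≤ x) :
    ∑ n ∈ Finset.Ioc 0 ⌊x⌋₊, rough z n * roughPsi z (x / n) =
      ∑ n ∈ Finset.Ioc 0 ⌊x / z⌋₊, rough z n * roughPsi z (x / n) := by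
  symm
  refine Finset.sum_subset (Finset.Ioc_subset_Ioc_right
    (Nat.floor_le_floor (div_le_self hx hz))) fun n hn hn' => ?_
  rw [Finset.mem_Ioc] at hn hn'
  have h0 : (0 : ℝ) < n := by exact_mod_cast hn.1
  have : x / z < n := Nat.lt_of_floor_lt (not_le.1 fun h => hn' ⟨hn.1, h⟩)
  rw [roughPsi_eq_zero, mul_zero]
  rw [div_lt_iff₀ (by linarith)] at this
  rw [div_lt_iff₀ h0]
  linarith

/-- Every rough number except `1` has logarithm at least `log z`. -/
lemma roughCount_sub_one_mul_log_le {z x : ℝ} (hz : 1 ≤ z) (hx : 1 ≤ x) :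
    (roughCount z x - 1) * Real.log z ≤ ∑ n ∈ Finset.Ioc 0 ⌊x⌋₊, rough z n * Real.log n := by
  have h1 : 1 ∈ Finset.Ioc 0 ⌊x⌋₊ := by
    rw [Finset.mem_Ioc]; exact ⟨one_pos, Nat.le_floor (by simpa using hx)⟩
  rw [roughCount, ← Finset.add_sum_erase _ _ h1, ← Finset.add_sum_erase _ _ h1, rough_one]
  simp only [Nat.cast_one, Real.log_one, mul_zero, zero_add, add_sub_cancel_left]
  rw [Finset.sum_mul]
  refine Finset.sum_le_sum fun n hn => ?_
  rw [Finset.mem_erase] at hn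
  rcases lt_or_ge (n : ℝ) z with h | h
  · simp [rough_eq_zero hn.1 h]
  · exact mul_le_mul_of_nonneg_left (Real.log_le_log (by linarith) h) (rough_nonneg z n)

/-- Crude sieve bound for the count of rough numbers, by induction on `K` through the
log-weighted identity and Chebyshev's bound for `ψ`. -/
lemma roughCount_crude (K : ℕ) : ∃ B : ℝ, 0 ≤ B ∧ ∀ z, Real.exp 1 ≤ z → ∀ t, 1 ≤ t → t ≤ z ^ K →
    roughCount z t ≤ 1 + B * t / Real.log z := by
  induction K with
  | zero =>
    refine ⟨0, le_rfl, fun z hz t h1 h2 => ?_⟩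
    rw [pow_zero] at h2
    rw [roughCount_eq_one h1 (h2.trans_lt (one_lt_of_exp_le hz))]
    simp
  | succ K ih =>
    obtain ⟨B, hB, h⟩ := ih
    have h4 : 0 ≤ Real.log 4 := Real.log_nonneg (by norm_num)
    refine ⟨(Real.log 4 + 4) * (2 + B + B * K), by positivity, fun z hz x h1 h2 => ?_⟩
    have hL := one_le_log hz
    have hz1 := one_lt_of_exp_le hz
    rcases lt_or_ge x z with hxz | hxz
    · rw [roughCount_eq_one h1 hxz]
      have : 0 ≤ (Real.log 4 + 4) * (2 + B + B * K) * x / Real.log z := by positivity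
      linarith
    have hY : 1 ≤ x / z := (one_le_div (by linarith)).2 hxz
    have hYK : x / z ≤ z ^ K := by
      rw [div_le_iff₀ (by linarith), ← pow_succ]; exact h2
    have hS := roughRecip_le hz hB hY hYK (h z hz)
    have h5 := roughCount_sub_one_mul_log_le hz1.le h1
    rw [sum_rough_log, sum_roughPsi_eq hz1.le (by linarith)] at h5
    have h6 : ∑ n ∈ Finset.Ioc 0 ⌊x / z⌋₊, rough z n * roughPsi z (x / n) ≤
        (Real.log 4 + 4) * x * roughRecip z (x / z) := by
      rw [roughRecip, Finset.mul_sum]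
      refine Finset.sum_le_sum fun n hn => ?_
      have hx0 : 0 ≤ x / n := by positivity
      calc rough z n * roughPsi z (x / n) ≤ rough z n * ((Real.log 4 + 4) * (x / n)) :=
            mul_le_mul_of_nonneg_left ((roughPsi_le_psi _ _).trans
              (Chebyshev.psi_le_const_mul_self hx0)) (rough_nonneg z n)
        _ = _ := by ring
    have h7 : (roughCount z x - 1) * Real.log z ≤ (Real.log 4 + 4) * (2 + B + B * K) * x := by
      have := mul_le_mul_of_nonneg_left hS (show 0 ≤ (Real.log 4 + 4) * x by positivity)
      linarith
    rw [← le_div_iff₀ (by linarith)] at h7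
    linarith

/-- Mertens-type bound: the sum of reciprocals is bounded for `Y ≤ z ^ K`. -/
lemma roughRecip_bounded (K : ℕ) : ∃ C : ℝ, 0 ≤ C ∧ ∀ z, Real.exp 1 ≤ z → ∀ Y, Y ≤ z ^ K →
    roughRecip z Y ≤ C := by
  obtain ⟨B, hB, h⟩ := roughCount_crude K
  refine ⟨2 + B + B * K, by positivity, fun z hz Y hYK => ?_⟩
  rcases le_total 1 Y with hY | hY
  · exact roughRecip_le hz hB hY hYK (h z hz)
  · exact (roughRecip_mono z hY).trans (roughRecip_le hz hB le_rfl
      (one_le_pow₀ (one_lt_of_exp_le hz).le) (h z hz))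

/-- The cost of replacing the weight `log n` by `log x`, from
`log (x / n) ≤ δ (x / n) + log (1 / δ)`. -/
lemma sum_rough_log_div (z : ℝ) {x δ : ℝ} (hx : 0 < x) (hδ : 0 < δ) :
    |roughCount z x * Real.log x - ∑ n ∈ Finset.Ioc 0 ⌊x⌋₊, rough z n * Real.log n| ≤
      δ * x * roughRecip z x + Real.log (1 / δ) * roughCount z x := by
  rw [roughCount, roughRecip, Finset.sum_mul, ← Finset.sum_sub_distrib, Finset.mul_sum,
    Finset.mul_sum, ← Finset.sum_add_distrib, abs_of_nonneg]
  · refine Finset.sum_le_sum fun n hn => ?_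
    have hn0 : (0 : ℝ) < n := by exact_mod_cast (Finset.mem_Ioc.1 hn).1
    have h1 : Real.log x - Real.log n ≤ δ * (x / n) + Real.log (1 / δ) := by
      have h2 := Real.log_le_sub_one_of_pos (show 0 < δ * (x / n) by positivity)
      rw [Real.log_mul hδ.ne' (by positivity), Real.log_div hx.ne' hn0.ne'] at h2
      rw [Real.log_div one_ne_zero hδ.ne', Real.log_one]
      linarith
    have := mul_le_mul_of_nonneg_left h1 (rough_nonneg z n)
    calc _ = rough z n * (Real.log x - Real.log n) := by ring
      _ ≤ _ := this
      _ = _ := by ring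
  · refine Finset.sum_nonneg fun n hn => ?_
    have hn0 : (0 : ℝ) < n := by exact_mod_cast (Finset.mem_Ioc.1 hn).1
    have h2 : (n : ℝ) ≤ x := (Nat.le_floor_iff hx.le).1 (Finset.mem_Ioc.1 hn).2
    have := mul_le_mul_of_nonneg_left (Real.log_le_log hn0 h2) (rough_nonneg z n)
    linarith

/-- The asymptotic form of Buchstab's identity: `Φ(x) log x = x ∫₁^{x/z} Φ(t) t⁻² dt + o(x)`. -/
lemma roughCount_mul_log (K : ℕ) {ε : ℝ} (hε : 0 < ε) : ∃ z₀ : ℝ, ∀ z, z₀ ≤ z →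
    ∀ x, z ≤ x → x ≤ z ^ K →
    |roughCount z x * Real.log x - x * ∫ t in (1 : ℝ)..(x / z), roughCount z t / t ^ 2| ≤
      ε * x := by
  obtain ⟨B, hB, hcrude⟩ := roughCount_crude K
  obtain ⟨C, hC, hrec⟩ := roughRecip_bounded K
  set δ := ε / (4 * (C + 1)) with hδdef
  have hδ : 0 < δ := by positivity
  have hδC : δ * C ≤ ε / 4 := by
    rw [hδdef, div_mul_eq_mul_div, div_le_div_iff₀ (by positivity) (by positivity)]
    nlinarith
  obtain ⟨z₁, hR⟩ := roughPsi_asymp hδ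
  set D := |Real.log (1 / δ)| with hD
  have hlog : ∀ᶠ z in atTop, 4 * D * B / ε ≤ Real.log z :=
    Real.tendsto_log_atTop.eventually (eventually_ge_atTop _)
  obtain ⟨z₂, h2⟩ := (((eventually_ge_atTop z₁).and (eventually_ge_atTop (4 * D / ε))).and
    ((eventually_ge_atTop (Real.exp 1)).and hlog)).exists_forall_of_atTop
  refine ⟨z₂, fun z hz x hzx hxK => ?_⟩
  obtain ⟨⟨hz1, hzD⟩, hze, hzl⟩ := h2 z hz
  have hL := one_le_log hze
  have hz0 := one_lt_of_exp_le hze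
  have hx0 : 0 < x := by linarith
  have hxz : x / z ≤ x := div_le_self hx0.le hz0.le
  have hY : 1 ≤ x / z := (one_le_div (by linarith)).2 hzx
  -- replace `log n` by `log x`
  have e1 := sum_rough_log_div z hx0 hδ
  have e2 : δ * x * roughRecip z x ≤ ε / 4 * x := by
    have := mul_le_mul_of_nonneg_left (hrec z hze x hxK) (show 0 ≤ δ * x by positivity)
    nlinarith
  have e3 : Real.log (1 / δ) * roughCount z x ≤ ε / 2 * x := by
    have hD0 : 0 ≤ D := abs_nonneg _
    calc Real.log (1 / δ) * roughCount z x ≤ D * (1 + B * x / Real.log z) :=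
          mul_le_mul (le_abs_self _) (hcrude z hze x (by linarith) hxK) (roughCount_nonneg z x) hD0
      _ = D + D * B * x / Real.log z := by ring
      _ ≤ ε / 4 * x + ε / 4 * x := by
          rw [div_le_iff₀ hε] at hzD hzl
          have : D ≤ ε / 4 * x := by nlinarith
          have : D * B * x / Real.log z ≤ ε / 4 * x := by
            rw [div_le_iff₀ (by linarith)]
            nlinarith
          linarith
      _ = _ := by ring
  -- replace `R(x/m)` by `x/m - z`
  have e4 : |∑ n ∈ Finset.Ioc 0 ⌊x / z⌋₊, rough z n * roughPsi z (x / n) -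
      ∑ n ∈ Finset.Ioc 0 ⌊x / z⌋₊, rough z n * (x / n - z)| ≤ δ * x * roughRecip z (x / z) := by
    rw [← Finset.sum_sub_distrib, roughRecip, Finset.mul_sum]
    refine (Finset.abs_sum_le_sum_abs _ _).trans (Finset.sum_le_sum fun n hn => ?_)
    have hn0 : (0 : ℝ) < n := by exact_mod_cast (Finset.mem_Ioc.1 hn).1
    have hnx : (n : ℝ) ≤ x / z := (Nat.le_floor_iff (by linarith)).1 (Finset.mem_Ioc.1 hn).2
    have hy : z ≤ x / n := by
      rw [le_div_iff₀ (by linarith)] at hnx ⊢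
      linarith
    have := mul_le_mul_of_nonneg_left (hR z hz1 (x / n) hy) (rough_nonneg z n)
    rw [← mul_sub, abs_mul, abs_of_nonneg (rough_nonneg z n)]
    calc _ ≤ _ := this
      _ = _ := by ring
  have e5 : δ * x * roughRecip z (x / z) ≤ ε / 4 * x := by
    have := mul_le_mul_of_nonneg_left (hrec z hze (x / z) (hxz.trans hxK))
      (show 0 ≤ δ * x by positivity)
    nlinarith
  rw [sum_rough_abel z x z hY, div_div_cancel₀ hx0.ne', sub_self, zero_mul, zero_add] at e4
  rw [sum_rough_log, sum_roughPsi_eq hz0.le hx0.le] at e1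
  rw [abs_le] at e1 e4 ⊢
  constructor <;> linarith

/-! ### Induction along the delay differential equation -/

/-- The range `z ≤ x ≤ z²`, where every integer counted by the integral is `1`. -/
lemma roughCount_asymp_base {ω : ℝ → ℝ} (hω_val : ∀ v : ℝ, 1 ≤ v → v ≤ 2 → ω v = 1 / v)
    {ε : ℝ} (hε : 0 < ε) : ∃ z₀ : ℝ, ∀ z, z₀ ≤ z → ∀ x, z ≤ x → x ≤ z ^ 2 →
      |roughCount z x * Real.log z - ω (Real.log x / Real.log z) * x + z| ≤ ε * x := by
  obtain ⟨z₁, h1⟩ := roughCount_mul_log 2 (half_pos hε)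
  have hlog : ∀ᶠ z in atTop, 2 / ε ≤ Real.log z :=
    Real.tendsto_log_atTop.eventually (eventually_ge_atTop _)
  obtain ⟨z₂, h2⟩ := ((eventually_ge_atTop z₁).and
    ((eventually_ge_atTop (Real.exp 1)).and hlog)).exists_forall_of_atTop
  refine ⟨z₂, fun z hz x hzx hx2 => ?_⟩
  obtain ⟨hz1, hze, hzl⟩ := h2 z hz
  have hL := one_le_log hze
  have hz0 := one_lt_of_exp_le hze
  have hx0 : 0 < x := by linarith
  have hY : 1 ≤ x / z := (one_le_div (by linarith)).2 hzx
  have hYz : x / z ≤ z := by rw [div_le_iff₀ (by linarith)]; linarith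
  have hI : ∫ t in (1 : ℝ)..(x / z), roughCount z t / t ^ 2 = 1 - z / x := by
    have : ∫ t in (1 : ℝ)..(x / z), roughCount z t / t ^ 2 = ∫ t in (1 : ℝ)..(x / z), 1 / t ^ 2 := by
      rw [intervalIntegral.integral_of_le hY, intervalIntegral.integral_of_le hY,
        integral_Ioc_eq_integral_Ioo, integral_Ioc_eq_integral_Ioo]
      refine setIntegral_congr_fun measurableSet_Ioo fun t ht => ?_
      simp only [roughCount_eq_one ht.1.le (ht.2.trans_le hYz)]
    rw [this, integral_inv_sq' one_pos (by linarith)]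
    simp
  have h3 := h1 z hz1 x hzx hx2
  rw [hI] at h3
  set L := Real.log z with hLdef
  set u := Real.log x / L with hu
  have hux : Real.log x = u * L := by rw [hu]; field_simp
  have hu1 : 1 ≤ u := by
    rw [hu, one_le_div (by linarith)]
    exact Real.log_le_log (by linarith) hzx
  have hu2 : u ≤ 2 := by
    rw [hu, div_le_iff₀ (by linarith)]
    exact_mod_cast log_le_of_le_pow hx0 hx2
  rw [hω_val u hu1 hu2]
  -- `z (u - 1) L = z log (x / z) ≤ x`
  have h4 : z * (u - 1) ≤ ε / 2 * x := by
    have h5 : (u - 1) * L ≤ x / z := by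
      have h6 := Real.log_le_sub_one_of_pos (show 0 < x / z by linarith)
      rw [Real.log_div hx0.ne' (by linarith), hux] at h6
      linarith
    rw [le_div_iff₀ (by linarith)] at h5
    rw [div_le_iff₀ hε] at hzl
    have h7 : 0 ≤ z * (u - 1) := mul_nonneg (by linarith) (by linarith)
    nlinarith
  have h8 : roughCount z x * L - 1 / u * x + z =
      (roughCount z x * Real.log x - x * (1 - z / x) + z * (u - 1)) / u := by
    rw [hux]
    field_simp
    ring
  rw [h8, abs_div, abs_of_pos (show 0 < u by linarith)]
  refine (div_le_self (abs_nonneg _) hu1).trans ((abs_add_le _ _).trans ?_)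
  rw [abs_of_nonneg (mul_nonneg (by linarith) (by linarith) : 0 ≤ z * (u - 1))]
  linarith

/-- Integrated form of the delay differential equation: `(v ω(v))' = ω(v - 1)`. -/
lemma integral_buchstab {ω : ℝ → ℝ} (hω_cont : ContinuousOn ω (Set.Ici 1))
    (hω_val : ∀ v : ℝ, 1 ≤ v → v ≤ 2 → ω v = 1 / v)
    (hω_deriv : ∀ v : ℝ, 2 < v → HasDerivAt ω ((ω (v - 1) - ω v) / v) v)
    {z Y : ℝ} (hz : 1 < z) (hY : z ≤ Y) :
    IntervalIntegrable (fun t => ω (Real.log t / Real.log z) / (Real.log z * t)) volume z Y ∧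
    ∫ t in z..Y, ω (Real.log t / Real.log z) / (Real.log z * t) =
      (1 + Real.log Y / Real.log z) * ω (1 + Real.log Y / Real.log z) - 1 := by
  have hL : 0 < Real.log z := Real.log_pos hz
  have hdiv : ∀ t ∈ Icc z Y, 1 ≤ Real.log t / Real.log z := fun t ht => by
    rw [one_le_div hL]
    exact Real.log_le_log (by linarith) ht.1
  have hlc : ContinuousOn (fun t => Real.log t / Real.log z) (Icc z Y) := fun t ht => by
    have : t ≠ 0 := by linarith [ht.1]
    exact ContinuousAt.continuousWithinAt ((Real.continuousAt_log this).div_const _)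
  have hint : IntervalIntegrable (fun t => ω (Real.log t / Real.log z) / (Real.log z * t))
      volume z Y := by
    refine ContinuousOn.intervalIntegrable ?_
    rw [uIcc_of_le hY]
    refine ContinuousOn.div (hω_cont.comp hlc hdiv) (by fun_prop) fun t ht => ?_
    have : 0 < t := by linarith [ht.1]
    positivity
  refine ⟨hint, ?_⟩
  rw [intervalIntegral.integral_eq_sub_of_hasDerivAt_of_le hY
    (f := fun t => (1 + Real.log t / Real.log z) * ω (1 + Real.log t / Real.log z)) ?_ ?_ hint]
  · rw [div_self hL.ne', hω_val (1 + 1) (by norm_num) (by norm_num)]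
    norm_num
  · refine (continuousOn_const.add hlc).mul
      (hω_cont.comp (continuousOn_const.add hlc) fun t ht => ?_)
    rw [mem_Ici]
    linarith [hdiv t ht]
  · intro t ht
    have ht0 : 0 < t := by linarith [ht.1]
    have hv : 2 < 1 + Real.log t / Real.log z := by
      have : 1 < Real.log t / Real.log z := by
        rw [one_lt_div hL]
        exact Real.log_lt_log (by linarith) ht.1
      linarith
    have hi : HasDerivAt (fun t => 1 + Real.log t / Real.log z) (t⁻¹ / Real.log z) t :=
      ((Real.hasDerivAt_log ht0.ne').div_const _).const_add 1
    have hd := hi.mul ((hω_deriv _ hv).comp t hi)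
    refine hd.congr_deriv ?_
    have hv0 : 1 + Real.log t / Real.log z ≠ 0 := by linarith
    rw [add_sub_cancel_left]
    simp only [Function.comp_apply]
    generalize ω (1 + Real.log t / Real.log z) = a
    generalize ω (Real.log t / Real.log z) = b
    generalize 1 + Real.log t / Real.log z = c at *
    field_simp
    ring

/-- Inserting the asymptotics on `[z, z ^ K]` into the integral of the approximate Buchstab identity
at a point `x ∈ [z², z ^ (K + 1)]`: on `[1, z)` the count is `1`, and on `[z, x / z]` the main term
integrates by `integral_buchstab`. -/
lemma roughCount_asymp_step {ω : ℝ → ℝ} (hω_cont : ContinuousOn ω (Set.Ici 1))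
    (hω_val : ∀ v : ℝ, 1 ≤ v → v ≤ 2 → ω v = 1 / v)
    (hω_deriv : ∀ v : ℝ, 2 < v → HasDerivAt ω ((ω (v - 1) - ω v) / v) v)
    {z x ε : ℝ} {K : ℕ} (hze : Real.exp 1 ≤ z) (hε : 0 ≤ ε) (hx : z ^ 2 ≤ x)
    (hxK : x ≤ z ^ (K + 1))
    (ih : ∀ t, z ≤ t → t ≤ z ^ K →
      |roughCount z t * Real.log z - ω (Real.log t / Real.log z) * t + z| ≤ ε * t) :
    |(∫ t in (1 : ℝ)..(x / z), roughCount z t / t ^ 2) -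
      (Real.log x / Real.log z) * ω (Real.log x / Real.log z)| ≤
      1 / z + ε * K + 1 / Real.log z := by
  have hL := one_le_log hze
  have hz0 := one_lt_of_exp_le hze
  have hzpos : 0 < z := by linarith
  have hx0 : 0 < x := lt_of_lt_of_le (by positivity) hx
  have hY : z ≤ x / z := by rw [le_div_iff₀ hzpos]; linarith
  have hYK : x / z ≤ z ^ K := by rw [div_le_iff₀ hzpos, ← pow_succ]; exact hxK
  set Y := x / z with hYdef
  have hY0 : 0 < Y := by linarith
  obtain ⟨hint, hval⟩ := integral_buchstab hω_cont hω_val hω_deriv hz0 hY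
  have hlog : 1 + Real.log Y / Real.log z = Real.log x / Real.log z := by
    rw [hYdef, Real.log_div hx0.ne' hzpos.ne']
    field_simp
    ring
  rw [hlog] at hval
  have hI1 : ∫ t in (1 : ℝ)..z, roughCount z t / t ^ 2 = 1 - 1 / z := by
    have : ∫ t in (1 : ℝ)..z, roughCount z t / t ^ 2 = ∫ t in (1 : ℝ)..z, 1 / t ^ 2 := by
      rw [intervalIntegral.integral_of_le hz0.le, intervalIntegral.integral_of_le hz0.le,
        integral_Ioc_eq_integral_Ioo, integral_Ioc_eq_integral_Ioo]
      refine setIntegral_congr_fun measurableSet_Ioo fun t ht => ?_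
      simp only [roughCount_eq_one ht.1.le ht.2]
    rw [this, integral_inv_sq' one_pos hzpos]
    simp
  have hrc := intervalIntegrable_roughCount z hzpos hY0
  have hI2 : |(∫ t in z..Y, roughCount z t / t ^ 2) -
      ∫ t in z..Y, ω (Real.log t / Real.log z) / (Real.log z * t)| ≤ ε * K + 1 / Real.log z := by
    rw [← intervalIntegral.integral_sub hrc hint]
    have hbd : ∀ t ∈ Icc z Y, |roughCount z t / t ^ 2 -
        ω (Real.log t / Real.log z) / (Real.log z * t)| ≤
        ε / Real.log z * (1 / t) + z / Real.log z * (1 / t ^ 2) := fun t ht => by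
      have ht0 : 0 < t := by linarith [ht.1]
      have h1 := ih t ht.1 (ht.2.trans hYK)
      have h2 : |roughCount z t * Real.log z - ω (Real.log t / Real.log z) * t| ≤ ε * t + z := by
        rw [abs_le] at h1 ⊢
        constructor <;> linarith
      have e1 : roughCount z t / t ^ 2 - ω (Real.log t / Real.log z) / (Real.log z * t) =
          (roughCount z t * Real.log z - ω (Real.log t / Real.log z) * t) /
            (Real.log z * t ^ 2) := by
        generalize ω (Real.log t / Real.log z) = b
        field_simp
      have e2 : ε / Real.log z * (1 / t) + z / Real.log z * (1 / t ^ 2) =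
          (ε * t + z) / (Real.log z * t ^ 2) := by
        field_simp
      have hpos : 0 < Real.log z * t ^ 2 := by positivity
      rw [e1, e2, abs_div, abs_of_pos hpos]
      gcongr
    have hi1 := (intervalIntegrable_inv' hzpos hY0).const_mul (ε / Real.log z)
    have hi2 := (intervalIntegrable_inv_sq hzpos hY0).const_mul (z / Real.log z)
    refine (intervalIntegral.abs_integral_le_integral_abs hY).trans
      ((intervalIntegral.integral_mono_on hY (hrc.sub hint).abs (hi1.add hi2) hbd).trans ?_)
    rw [intervalIntegral.integral_add hi1 hi2, intervalIntegral.integral_const_mul,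
      intervalIntegral.integral_const_mul, integral_inv_sq' hzpos hY0,
      integral_one_div_of_pos hzpos hY0]
    have h3 : ε / Real.log z * Real.log (Y / z) ≤ ε * K := by
      rw [div_mul_eq_mul_div, div_le_iff₀ (by linarith), mul_assoc]
      refine mul_le_mul_of_nonneg_left ?_ hε
      exact (Real.log_le_log (by positivity) (div_le_self hY0.le hz0.le)).trans
        (log_le_of_le_pow hY0 hYK)
    have h4 : z / Real.log z * (1 / z - 1 / Y) ≤ 1 / Real.log z := by
      have : z / Real.log z * (1 / z - 1 / Y) ≤ z / Real.log z * (1 / z) := by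
        have : 0 ≤ 1 / Y := by positivity
        gcongr
        linarith
      refine this.trans_eq ?_
      field_simp
    linarith
  rw [hval] at hI2
  rw [← intervalIntegral.integral_add_adjacent_intervals
    (intervalIntegrable_roughCount z one_pos hzpos) hrc, hI1]
  have h5 : 0 ≤ 1 / z := by positivity
  rw [abs_le] at hI2 ⊢
  constructor <;> linarith

/-- Buchstab's asymptotic formula `Φ(x, z) log z = ω(u) x - z + o(x)`, `u = log x / log z`,
uniformly for `1 ≤ u ≤ K`. -/
lemma roughCount_asymp {ω : ℝ → ℝ} (hω_cont : ContinuousOn ω (Set.Ici 1))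
    (hω_val : ∀ v : ℝ, 1 ≤ v → v ≤ 2 → ω v = 1 / v)
    (hω_deriv : ∀ v : ℝ, 2 < v → HasDerivAt ω ((ω (v - 1) - ω v) / v) v) (K : ℕ) :
    ∀ ε : ℝ, 0 < ε → ∃ z₀ : ℝ, ∀ z, z₀ ≤ z → ∀ x, z ≤ x → x ≤ z ^ K →
      |roughCount z x * Real.log z - ω (Real.log x / Real.log z) * x + z| ≤ ε * x := by
  induction K with
  | zero =>
    refine fun ε hε => ⟨2, fun z hz x h1 h2 => ?_⟩
    rw [pow_zero] at h2
    linarith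
  | succ K ih =>
    intro ε hε
    set δ := ε / (6 * (K + 1)) with hδdef
    have hδ : 0 < δ := by positivity
    have hδK : δ * K ≤ ε / 6 := by
      rw [hδdef, div_mul_eq_mul_div, div_le_div_iff₀ (by positivity) (by positivity)]
      nlinarith
    obtain ⟨z₁, h1⟩ := ih δ hδ
    obtain ⟨z₂, h2⟩ := roughCount_mul_log (K + 1) (show 0 < ε / 6 by positivity)
    obtain ⟨z₃, h3⟩ := roughCount_asymp_base hω_val hε
    have hlog : ∀ᶠ z in atTop, 6 / ε ≤ Real.log z :=
      Real.tendsto_log_atTop.eventually (eventually_ge_atTop _)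
    obtain ⟨z₄, h4⟩ := (((eventually_ge_atTop z₁).and (eventually_ge_atTop z₂)).and
      (((eventually_ge_atTop z₃).and (eventually_ge_atTop (6 / ε))).and
        ((eventually_ge_atTop (Real.exp 1)).and hlog))).exists_forall_of_atTop
    refine ⟨z₄, fun z hz x hzx hxK => ?_⟩
    obtain ⟨⟨hz1, hz2⟩, ⟨hz3, hzε⟩, hze, hzl⟩ := h4 z hz
    rcases le_total x (z ^ 2) with hx2 | hx2
    · exact h3 z hz3 x hzx hx2
    have hL := one_le_log hze
    have hz0 := one_lt_of_exp_le hze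
    have hx0 : 0 < x := by linarith
    have h5 := roughCount_asymp_step hω_cont hω_val hω_deriv hze hδ.le hx2 hxK (h1 z hz1)
    have h6 := h2 z hz2 x hzx hxK
    set L := Real.log z with hLdef
    set u := Real.log x / L with hu
    set I := ∫ t in (1 : ℝ)..(x / z), roughCount z t / t ^ 2
    have hux : Real.log x = u * L := by rw [hu]; field_simp
    have hu1 : 1 ≤ u := by
      rw [hu, one_le_div (by linarith)]
      exact Real.log_le_log (by linarith) hzx
    have h7 : 1 / z ≤ ε / 6 := by
      rw [div_le_iff₀ hε] at hzε
      rw [div_le_div_iff₀ (by linarith) (by norm_num)]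
      linarith
    have h8 : 1 / L ≤ ε / 6 := by
      rw [div_le_iff₀ hε] at hzl
      rw [div_le_div_iff₀ (by linarith) (by norm_num)]
      linarith
    have h9 : |x * I - x * (u * ω u)| ≤ x * (ε / 2) := by
      rw [← mul_sub, abs_mul, abs_of_pos hx0]
      refine mul_le_mul_of_nonneg_left ?_ hx0.le
      linarith
    have h10 : |roughCount z x * Real.log x - x * (u * ω u)| ≤ ε / 6 * x + x * (ε / 2) :=
      (abs_sub_le _ _ _).trans (add_le_add h6 h9)
    have h11 : roughCount z x * L - ω u * x =
        (roughCount z x * Real.log x - x * (u * ω u)) / u := by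
      rw [hux]
      generalize ω u = w
      field_simp
    have h12 : |roughCount z x * L - ω u * x| ≤ ε / 6 * x + x * (ε / 2) := by
      rw [h11, abs_div, abs_of_pos (show 0 < u by linarith)]
      exact (div_le_self (abs_nonneg _) hu1).trans h10
    have h13 : z ≤ ε / 6 * x := by
      have : z ^ 2 * (1 / z) ≤ x * (ε / 6) := by gcongr
      have e : z ^ 2 * (1 / z) = z := by field_simp
      linarith
    refine (abs_add_le _ _).trans ?_
    rw [abs_of_pos (show 0 < z by linarith)]
    linarith

/-- For `0 ≤ x` the integer `0` lies outside `(x, x + y]`, so the set in question consists of rough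
numbers. -/
lemma card_rough_eq {z x y : ℝ} (hx : 0 ≤ x) (hy : 0 ≤ y) :
    (Nat.card {n : ℕ | x < (n : ℝ) ∧ (n : ℝ) ≤ x + y ∧
      ∀ p : ℕ, p.Prime → p ∣ n → z ≤ (p : ℝ)} : ℝ) = roughCount z (x + y) - roughCount z x := by
  classical
  have hfl : ⌊x⌋₊ ≤ ⌊x + y⌋₊ := Nat.floor_le_floor (by linarith)
  have h1 : roughCount z (x + y) - roughCount z x =
      ∑ n ∈ Finset.Ioc ⌊x⌋₊ ⌊x + y⌋₊, rough z n := by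
    rw [roughCount, roughCount, ← Finset.sum_Ioc_consecutive _ (Nat.zero_le _) hfl]
    ring
  have h2 : {n : ℕ | x < (n : ℝ) ∧ (n : ℝ) ≤ x + y ∧
      ∀ p : ℕ, p.Prime → p ∣ n → z ≤ (p : ℝ)} =
      ((Finset.Ioc ⌊x⌋₊ ⌊x + y⌋₊).filter fun n : ℕ =>
        n ≠ 0 ∧ ∀ p : ℕ, p.Prime → p ∣ n → z ≤ (p : ℝ) : Finset ℕ) := by
    ext n
    simp only [mem_ofPred_eq, Finset.coe_filter, Finset.mem_Ioc, Nat.floor_lt hx,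
      Nat.le_floor_iff (show 0 ≤ x + y by linarith)]
    constructor
    · rintro ⟨h1, h2, h3⟩
      refine ⟨⟨h1, h2⟩, ?_, h3⟩
      rintro rfl
      rw [Nat.cast_zero] at h1
      linarith
    · rintro ⟨⟨h1, h2⟩, _, h3⟩
      exact ⟨h1, h2, h3⟩
  rw [h1, h2, Nat.card_coe_set_eq, Set.ncard_coe_finset]
  simp only [rough_apply]
  rw [Finset.sum_boole]

/-- Subtracting the asymptotics at `x` from those at `x + y`: the terms `z` cancel, and
`log (x + y) / log z` tends to `u`, so `ω` at this point may be replaced by `ω u`. -/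
lemma buchstab_final {u : ℝ} (hu : 1 < u) {ω : ℝ → ℝ}
    (hω_cont : ContinuousOn ω (Set.Ici 1))
    (hω_val : ∀ v : ℝ, 1 ≤ v → v ≤ 2 → ω v = 1 / v)
    (hω_deriv : ∀ v : ℝ, 2 < v → HasDerivAt ω ((ω (v - 1) - ω v) / v) v)
    {ε : ℝ} (hε : 0 < ε) :
    ∃ x₀ : ℝ, ∀ x : ℝ, x₀ ≤ x → ∀ y : ℝ, ε * x ≤ y → y ≤ x →
      |(roughCount (x ^ (1 / u)) (x + y) - roughCount (x ^ (1 / u)) x) -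
        ω u * y / Real.log (x ^ (1 / u))| ≤ ε * y / Real.log (x ^ (1 / u)) := by
  -- the total error is `5 δ x = ε (ε x) ≤ ε y`
  set δ := ε ^ 2 / 5 with hδdef
  have hδ : 0 < δ := by positivity
  set K := ⌈u⌉₊ + 1 with hK
  have huK : u + 1 ≤ K := by
    rw [hK]; push_cast
    linarith [Nat.le_ceil u]
  obtain ⟨z₁, h1⟩ := roughCount_asymp hω_cont hω_val hω_deriv K δ hδ
  obtain ⟨η, hη, hc⟩ := Metric.continuousWithinAt_iff.1 (hω_cont u hu.le) δ hδ
  have hlog : ∀ᶠ z in atTop, 2 * Real.log 2 / η ≤ Real.log z :=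
    Real.tendsto_log_atTop.eventually (eventually_ge_atTop _)
  have hzx : Tendsto (fun x : ℝ => x ^ (1 / u)) atTop atTop :=
    tendsto_rpow_atTop (by positivity)
  obtain ⟨x₀, h2⟩ := ((eventually_ge_atTop 1).and (hzx.eventually
    (((eventually_ge_atTop z₁).and (eventually_ge_atTop 2)).and
      ((eventually_ge_atTop (Real.exp 1)).and hlog)))).exists_forall_of_atTop
  refine ⟨x₀, fun x hx y hy1 hy2 => ?_⟩
  obtain ⟨hx1, ⟨hz1, hz2⟩, hze, hzl⟩ := h2 x hx
  set z := x ^ (1 / u) with hz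
  have hL := one_le_log hze
  have hx0 : 0 < x := by linarith
  have hy0 : 0 ≤ y := (by positivity : 0 ≤ ε * x).trans hy1
  have hzu : z ^ u = x := by
    rw [hz, ← Real.rpow_mul hx0.le, one_div_mul_cancel (by linarith), Real.rpow_one]
  have hlogx : Real.log x = u * Real.log z := by
    rw [← hzu, Real.log_rpow (by linarith)]
  have hlx : Real.log x / Real.log z = u := by
    rw [hlogx]; field_simp
  have hzlex : z ≤ x := by
    calc z = z ^ (1 : ℝ) := (Real.rpow_one z).symm
      _ ≤ z ^ u := Real.rpow_le_rpow_of_exponent_le (by linarith) hu.le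
      _ = x := hzu
  -- `x + y ≤ 2 x ≤ z ^ (u + 1) ≤ z ^ K`
  have h2x : 2 * x ≤ z ^ K := by
    calc 2 * x ≤ z * z ^ u := by rw [hzu]; gcongr
      _ = z ^ (u + 1) := by rw [Real.rpow_add_one (by linarith)]; ring
      _ ≤ z ^ (K : ℝ) := Real.rpow_le_rpow_of_exponent_le (by linarith) huK
      _ = z ^ K := Real.rpow_natCast z K
  have e1 := h1 z hz1 x hzlex (by linarith)
  have e2 := h1 z hz1 (x + y) (by linarith) (by linarith)
  rw [hlx] at e1
  set w := Real.log (x + y) / Real.log z with hw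
  have hwu : u ≤ w := by
    rw [hw, ← hlx]
    gcongr
    linarith
  have hwu2 : w - u < η := by
    have h3 : Real.log (x + y) ≤ Real.log 2 + Real.log x := by
      rw [← Real.log_mul (by norm_num) hx0.ne']
      exact Real.log_le_log (by linarith) (by linarith)
    have h4 : w - u ≤ Real.log 2 / Real.log z := by
      rw [hw, ← hlx, ← sub_div]
      gcongr
      linarith
    refine h4.trans_lt ?_
    rw [div_le_iff₀ hη] at hzl
    rw [div_lt_iff₀ (by linarith)]
    have : 0 < Real.log 2 := Real.log_pos (by norm_num)
    linarith
  have e3 : |ω w - ω u| ≤ δ := by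
    have := hc (x := w) (show 1 ≤ w by linarith)
      (by rw [Real.dist_eq, abs_of_nonneg (by linarith)]; exact hwu2)
    rw [Real.dist_eq] at this
    exact this.le
  have e4 : |(ω w - ω u) * (x + y)| ≤ δ * (2 * x) := by
    rw [abs_mul, abs_of_nonneg (show 0 ≤ x + y by linarith)]
    gcongr
    linarith
  have e5 : δ * (x + y) ≤ δ * (2 * x) := by gcongr; linarith
  have e6 : 5 * δ * x ≤ ε * y := by
    calc 5 * δ * x = ε * (ε * x) := by rw [hδdef]; ring
      _ ≤ ε * y := by gcongr
  set A := roughCount z (x + y)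
  set B := roughCount z x
  have e7 : |(A - B) * Real.log z - ω u * y| ≤ ε * y := by
    rw [abs_le] at e1 e2 e4 ⊢
    constructor <;> linarith
  have e8 : A - B - ω u * y / Real.log z = ((A - B) * Real.log z - ω u * y) / Real.log z := by
    field_simp
  rw [e8, abs_div, abs_of_pos (show 0 < Real.log z by linarith)]
  gcongr

end

/-- Buchstab's theorem: for fixed `u > 1` and `z = x^(1/u)`, the number of integers
`n ∈ (x, x+y]` free of prime factors `< z` is `(1 + o(1)) ω(u) y / log z`, uniformly for
`εx ≤ y ≤ x`, where `ω` is the Buchstab function. -/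
theorem buchstab_count (u : ℝ) (hu : 1 < u) (ω : ℝ → ℝ)
    (hω_cont : ContinuousOn ω (Set.Ici 1))
    (hω_val : ∀ v : ℝ, 1 ≤ v → v ≤ 2 → ω v = 1 / v)
    (hω_deriv : ∀ v : ℝ, 2 < v → HasDerivAt ω ((ω (v - 1) - ω v) / v) v) :
    ∀ ε : ℝ, 0 < ε → ∃ x₀ : ℝ, ∀ x : ℝ, x₀ ≤ x → ∀ y : ℝ, ε * x ≤ y → y ≤ x →
      |(Nat.card {n : ℕ | x < (n : ℝ) ∧ (n : ℝ) ≤ x + y ∧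
          ∀ p : ℕ, p.Prime → p ∣ n → x ^ (1 / u) ≤ (p : ℝ)} : ℝ) -
        ω u * y / Real.log (x ^ (1 / u))| ≤ ε * y / Real.log (x ^ (1 / u)) := by
  intro ε hε
  obtain ⟨x₀, h⟩ := buchstab_final hu hω_cont hω_val hω_deriv hε
  refine ⟨max x₀ 0, fun x hx y hy1 hy2 => ?_⟩
  have hx0 : 0 ≤ x := (le_max_right _ _).trans hx
  have hy0 : 0 ≤ y := (mul_nonneg hε.le hx0).trans hy1
  rw [card_rough_eq hx0 hy0]
  exact h x ((le_max_left _ _).trans hx) y hy1 hy2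
end

section
/- Let ω be the Buchstab function. Then T₄ < log(14·(1/4 − 1/15.1) − 1). -/
/-!
Write `W(u) = u ω(u)`, so that `W(v) = 1 + ∫₁^{v-1} W(x)/x dx` for `v ≥ 2`, and let `J k` be the
operator `f ↦ (v ↦ ∫ₖ^{v-1} f(x)/x dx)`. Each of the four integrations is of the form
`∫ₐ^{s/(k+1)} f(s/t - 1) / (t (s - t)) dt`, and the substitution `x = s/t - 1` turns it into
`(J k f)(s/a) / s` (`layer`). Hence the fourfold integral is exactly
`(J 4 (J 3 (J 2 (J 1 W))))(14)`, a one-variable iteration (`fourfold_eq`).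

The iteration is bounded above by piecewise quartics. If `f(a + t) ≤ p(t)` on `[0, h]` and
`p(t) ≤ (a + t) q'(t)` there, then `J k f (a + 1 + t) ≤ q(t)` once this holds at `t = 0` (`step`);
the polynomial inequality is certified by nonnegative Bernstein coefficients. Since
`J 1 W = W - 1`, the same lemma bounds `W` itself, starting from `W = 1` on `[1, 2]`; beyond `4` the
linear bound `W(u) ≤ 0.56175 u` is sharp enough, as `ω` is already very close to `exp (-γ)`.

The quartics come from the remark that `(a + t) q'(t) - p(t)` must equal `-p(-a)` at `t = -a`:
a suitable multiple of a single Bernstein polynomial is added to `p` to make it divisible by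
`a + t`, and the coefficients of the antiderivative `q` of the quotient are rounded up. The
resulting bound is `0.45203`, against a right-hand side of about `0.45289`.
-/

open Set MeasureTheory intervalIntegral

namespace BuchstabT4

/-! ### The Buchstab operator -/

/-- The operator `f ↦ (v ↦ ∫ₖ^{v-1} f(x)/x dx)`, written with its lower limit `k`.
It is only used for `v ≥ k + 1`. -/
noncomputable def J (k : ℝ) (f : ℝ → ℝ) (v : ℝ) : ℝ := ∫ x in k..(v - 1), f x / x

lemma J_start (k : ℝ) (f : ℝ → ℝ) : J k f (k + 1) = 0 := by
  simp [J]

lemma contOn_div {k : ℝ} (hk : 0 < k) {f : ℝ → ℝ} (hf : ContinuousOn f (Ici k)) :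
    ContinuousOn (fun x => f x / x) (Ici k) :=
  hf.div continuousOn_id fun _ hx => (hk.trans_le hx).ne'

lemma J_hasDerivAt {k : ℝ} (hk : 0 < k) {f : ℝ → ℝ} (hf : ContinuousOn f (Ici k)) {v : ℝ}
    (hv : k + 1 < v) : HasDerivAt (J k f) (f (v - 1) / (v - 1)) v := by
  have hc := contOn_div hk hf
  have hm : Ici k ∈ nhds (v - 1) := Ici_mem_nhds (by linarith)
  have h1 : HasDerivAt (fun u => ∫ x in k..u, f x / x) (f (v - 1) / (v - 1)) (v - 1) := by
    apply integral_hasDerivAt_right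
    · apply ContinuousOn.intervalIntegrable
      apply hc.mono
      rw [uIcc_of_le (by linarith)]
      exact Icc_subset_Ici_self
    · exact ContinuousOn.stronglyMeasurableAtFilter_nhdsWithin hc measurableSet_Ici (v - 1)
        |>.filter_mono (by rw [nhdsWithin_eq_nhds.2 hm])
    · exact hc.continuousAt hm
  exact h1.comp_sub_const v 1

lemma J_contOn {k : ℝ} (hk : 0 < k) {f : ℝ → ℝ} (hf : ContinuousOn f (Ici k)) :
    ContinuousOn (J k f) (Ici (k + 1)) := by
  have hc := contOn_div hk hf
  intro v hv
  have hv' : k + 1 ≤ v := hv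
  have h1 : ContinuousOn (fun u => ∫ x in k..u, f x / x) (uIcc k v) := by
    apply continuousOn_primitive_interval'
    · apply ContinuousOn.intervalIntegrable
      apply hc.mono
      rw [uIcc_of_le (by linarith)]
      exact Icc_subset_Ici_self
    · exact left_mem_uIcc
  rw [uIcc_of_le (by linarith)] at h1
  have h2 : ContinuousOn (J k f) (Icc (k + 1) (v + 1)) := by
    refine h1.comp (f := fun u : ℝ => u - 1) (by fun_prop) ?_
    intro u hu
    exact ⟨by linarith [hu.1], by linarith [hu.2]⟩
  refine (h2 v ⟨hv', by linarith⟩).mono_of_mem_nhdsWithin ?_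
  rw [mem_nhdsWithin]
  exact ⟨Iio (v + 1), isOpen_Iio, by simp, fun u hu => ⟨hu.2, (mem_Iio.1 hu.1).le⟩⟩

/-- The substitution `x = s / t - 1` turns one layer of the integral into `J`. -/
lemma layer {k : ℝ} (hk : 0 < k) {f : ℝ → ℝ} (hf : ContinuousOn f (Ici k)) {s a : ℝ}
    (hs : 0 < s) (ha : 0 < a) (has : a ≤ s / (k + 1)) :
    ∫ t in a..(s / (k + 1)), f ((s - t) / t) / (t * (s - t)) = J k f (s / a) / s := by
  have key : ∀ t, a ≤ t → t ≤ s / (k + 1) → 0 < t ∧ (k + 1) * t ≤ s := by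
    intro t h1 h2
    refine ⟨ha.trans_le h1, ?_⟩
    rw [le_div_iff₀ (by linarith)] at h2
    linarith
  have hfc : ContinuousOn (fun t => f ((s - t) / t) / (t * (s - t))) (Icc a (s / (k + 1))) := by
    refine ContinuousOn.div ?_ (by fun_prop) ?_
    · refine hf.comp (f := fun t => (s - t) / t) ?_ ?_
      · exact ContinuousOn.div (by fun_prop) (by fun_prop) fun t ht => (key t ht.1 ht.2).1.ne'
      · intro t ht
        obtain ⟨h1, h2⟩ := key t ht.1 ht.2
        change k ≤ (s - t) / t
        rw [le_div_iff₀ h1]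
        linarith
    · intro t ht
      obtain ⟨h1, h2⟩ := key t ht.1 ht.2
      have : 0 < s - t := by nlinarith
      positivity
  have hG : ContinuousOn (fun t => J k f (s / t)) (Icc a (s / (k + 1))) := by
    refine (J_contOn hk hf).comp (f := fun t => s / t) ?_ ?_
    · exact ContinuousOn.div (by fun_prop) (by fun_prop) fun t ht => (key t ht.1 ht.2).1.ne'
    · intro t ht
      obtain ⟨h1, h2⟩ := key t ht.1 ht.2
      change k + 1 ≤ s / t
      rwa [le_div_iff₀ h1]
  have hD : ∀ t ∈ Ioo a (s / (k + 1)), HasDerivAt (fun t => -(J k f (s / t)) / s)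
      (f ((s - t) / t) / (t * (s - t))) t := by
    intro t ht
    obtain ⟨h1, -⟩ := key t ht.1.le ht.2.le
    have h2 : (k + 1) * t < s := by
      have := ht.2
      rw [lt_div_iff₀ (by linarith)] at this
      linarith
    have h3 : 0 < s - t := by nlinarith
    have hv : k + 1 < s / t := by rwa [lt_div_iff₀ h1]
    have hd : HasDerivAt (fun t => s / t) (-s / t ^ 2) t := by
      have := (hasDerivAt_inv h1.ne').const_mul s
      simp only [div_eq_mul_inv]
      refine this.congr_deriv ?_
      ring
    have h4 := (((J_hasDerivAt hk hf hv).comp t hd).neg).div_const s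
    have e : s / t - 1 = (s - t) / t := by field_simp
    rw [e] at h4
    refine h4.congr_deriv ?_
    field_simp
  rw [integral_eq_sub_of_hasDerivAt_of_le has (by
    exact (hG.neg).div_const s) hD (by
    apply ContinuousOn.intervalIntegrable
    rwa [uIcc_of_le has])]
  have e : s / (s / (k + 1)) = k + 1 := by
    have : k + 1 ≠ 0 := by linarith
    field_simp
  rw [e, J_start]
  ring

/-! ### Piecewise quartic majorants -/

/-- A quartic whose Bernstein coefficients on `[0, h]` are nonnegative is nonnegative there. -/
lemma quartic_nonneg {h d0 d1 d2 d3 d4 t : ℝ} (hh : 0 < h) (ht : t ∈ Icc 0 h)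
    (b : 0 ≤ d0 ∧ 0 ≤ 4 * d0 + d1 * h ∧ 0 ≤ 6 * d0 + 3 * d1 * h + d2 * h ^ 2 ∧
      0 ≤ 4 * d0 + 3 * d1 * h + 2 * d2 * h ^ 2 + d3 * h ^ 3 ∧
      0 ≤ d0 + d1 * h + d2 * h ^ 2 + d3 * h ^ 3 + d4 * h ^ 4) :
    0 ≤ d0 + d1 * t + d2 * t ^ 2 + d3 * t ^ 3 + d4 * t ^ 4 := by
  obtain ⟨b0, b1, b2, b3, b4⟩ := b
  have h1 : 0 ≤ t := ht.1
  have h2 : 0 ≤ h - t := sub_nonneg.2 ht.2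
  have e : (d0 + d1 * t + d2 * t ^ 2 + d3 * t ^ 3 + d4 * t ^ 4) * h ^ 4 =
      d0 * (h - t) ^ 4 + (4 * d0 + d1 * h) * (t * (h - t) ^ 3) +
      (6 * d0 + 3 * d1 * h + d2 * h ^ 2) * (t ^ 2 * (h - t) ^ 2) +
      (4 * d0 + 3 * d1 * h + 2 * d2 * h ^ 2 + d3 * h ^ 3) * (t ^ 3 * (h - t)) +
      (d0 + d1 * h + d2 * h ^ 2 + d3 * h ^ 3 + d4 * h ^ 4) * t ^ 4 := by ring
  refine nonneg_of_mul_nonneg_left (b := h ^ 4) ?_ (by positivity)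
  rw [e]
  positivity

/-- `Bd f a h c₀ … c₄`: on `[a, a + h]` the function `f` is at most the quartic with coefficients
`c₀, …, c₄` in the local variable `t = x - a`. -/
def Bd (f : ℝ → ℝ) (a h c0 c1 c2 c3 c4 : ℝ) : Prop :=
  ∀ t ∈ Icc 0 h, f (a + t) ≤ c0 + c1 * t + c2 * t ^ 2 + c3 * t ^ 3 + c4 * t ^ 4

lemma Bd.right {f : ℝ → ℝ} {a h c0 c1 c2 c3 c4 : ℝ} (H : Bd f a h c0 c1 c2 c3 c4) (a' q : ℝ)
    (hh : 0 ≤ h ∧ a' = a + h)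
    (hq : c0 + c1 * h + c2 * h ^ 2 + c3 * h ^ 3 + c4 * h ^ 4 ≤ q) : f a' ≤ q := by
  rw [hh.2]
  exact (H h ⟨hh.1, le_rfl⟩).trans hq

/-- If `f ≤ p` on `[a, a + h]` and `p(t) ≤ (a + t) q'(t)`, then `J k f ≤ q` on
`[a + 1, a + 1 + h]` as soon as this holds at the left end. The last hypothesis is the
nonnegativity of the Bernstein coefficients of `(a + t) q'(t) - p(t)`. -/
lemma step {k : ℝ} (hk : 0 < k) {f : ℝ → ℝ} (hf : ContinuousOn f (Ici k))
    {a h p0 p1 p2 p3 p4 : ℝ} (H : Bd f a h p0 p1 p2 p3 p4)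
    (a' q0 q1 q2 q3 q4 : ℝ) (h0 : J k f a' ≤ q0)
    (hr : k ≤ a ∧ 0 < h ∧ a' = a + 1)
    (hb : 0 ≤ a * q1 - p0 ∧
      0 ≤ 4 * (a * q1 - p0) + (q1 + 2 * a * q2 - p1) * h ∧
      0 ≤ 6 * (a * q1 - p0) + 3 * (q1 + 2 * a * q2 - p1) * h +
        (2 * q2 + 3 * a * q3 - p2) * h ^ 2 ∧
      0 ≤ 4 * (a * q1 - p0) + 3 * (q1 + 2 * a * q2 - p1) * h +
        2 * (2 * q2 + 3 * a * q3 - p2) * h ^ 2 + (3 * q3 + 4 * a * q4 - p3) * h ^ 3 ∧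
      0 ≤ (a * q1 - p0) + (q1 + 2 * a * q2 - p1) * h +
        (2 * q2 + 3 * a * q3 - p2) * h ^ 2 + (3 * q3 + 4 * a * q4 - p3) * h ^ 3 +
        (4 * q4 - p4) * h ^ 4) :
    Bd (J k f) a' h q0 q1 q2 q3 q4 := by
  obtain ⟨hka, hh, rfl⟩ := hr
  have hmono : MonotoneOn (fun t => (q0 + q1 * t + q2 * t ^ 2 + q3 * t ^ 3 + q4 * t ^ 4) -
      J k f (a + 1 + t)) (Icc 0 h) := by
    refine monotoneOn_of_hasDerivWithinAt_nonneg (convex_Icc 0 h)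
      (f' := fun t => (q1 + 2 * q2 * t + 3 * q3 * t ^ 2 + 4 * q4 * t ^ 3) -
        f (a + t) / (a + t)) ?_ ?_ ?_
    · refine ContinuousOn.sub (by fun_prop) ?_
      refine (J_contOn hk hf).comp (f := fun t => a + 1 + t) (by fun_prop) ?_
      intro t ht
      change k + 1 ≤ a + 1 + t
      linarith [ht.1]
    · intro t ht
      rw [interior_Icc] at ht
      apply HasDerivAt.hasDerivWithinAt
      have hJ := J_hasDerivAt hk hf (v := a + 1 + t) (by linarith [ht.1])
      have hJ' := hJ.comp_const_add (a + 1) t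
      rw [show a + 1 + t - 1 = a + t by ring] at hJ'
      refine HasDerivAt.sub ?_ hJ'
      have h1 := ((hasDerivAt_id t).const_mul q1)
      have h2 := ((hasDerivAt_pow 2 t).const_mul q2)
      have h3 := ((hasDerivAt_pow 3 t).const_mul q3)
      have h4 := ((hasDerivAt_pow 4 t).const_mul q4)
      have := (((h1.const_add q0).add h2).add h3).add h4
      refine this.congr_deriv ?_
      norm_num
      ring
    · intro t ht
      rw [interior_Icc] at ht
      have hpos : 0 < a + t := by linarith [ht.1]
      have ht' : t ∈ Icc 0 h := ⟨ht.1.le, ht.2.le⟩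
      have h1 := H t ht'
      have h2 := quartic_nonneg hh ht' hb
      rw [sub_nonneg, div_le_iff₀ hpos]
      nlinarith [h1, h2]
  intro t ht
  have := hmono (left_mem_Icc.2 hh.le) ht ht.1
  simp only [add_zero] at this
  nlinarith [this, h0]

/-! ### The Buchstab function -/

/-- A solution of the Buchstab delay equation, in the form in which it is used. -/
structure IsBuchstab (ω : ℝ → ℝ) : Prop where
  cont : ContinuousOn ω (Ici 1)
  val : ∀ v : ℝ, 1 ≤ v → v ≤ 2 → ω v = 1 / v
  deriv : ∀ v : ℝ, 2 < v → HasDerivAt ω ((ω (v - 1) - ω v) / v) v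

/-- `W(u) = u ω(u)`, for which the delay equation reads `W'(u) = W(u - 1) / (u - 1)`. -/
def W (ω : ℝ → ℝ) (u : ℝ) : ℝ := u * ω u

variable {ω : ℝ → ℝ}

lemma W_contOn (h : IsBuchstab ω) : ContinuousOn (W ω) (Ici 1) :=
  continuousOn_id.mul h.cont

lemma W_eq (h : IsBuchstab ω) {v : ℝ} (hv : 2 ≤ v) : W ω v = 1 + J 1 (W ω) v := by
  have hW := W_contOn h
  have h1 : ContinuousOn (fun v => W ω v - J 1 (W ω) v) (Icc 2 v) := by
    refine (hW.mono ?_).sub ((J_contOn one_pos hW).mono ?_)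
    · intro x hx
      exact le_trans (by norm_num) hx.1
    · intro x hx
      exact le_trans (by norm_num) hx.1
  have h2 : ∀ x ∈ Ioo 2 v, HasDerivAt (fun v => W ω v - J 1 (W ω) v) 0 x := by
    intro x hx
    have hx2 : 2 < x := hx.1
    have h5 := (hasDerivAt_id x).mul (h.deriv x hx2)
    have h6 := h5.sub (J_hasDerivAt one_pos hW (v := x) (by linarith))
    refine h6.congr_deriv ?_
    have h7 : x ≠ 0 := by linarith
    have h8 : x - 1 ≠ 0 := by linarith
    simp only [W, id]
    field_simp
    ring
  have h5 := integral_eq_sub_of_hasDerivAt_of_le hv h1 h2 (by simp)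
  rw [intervalIntegral.integral_zero] at h5
  have h3 : J 1 (W ω) 2 = 0 := by
    have := J_start 1 (W ω)
    norm_num at this
    exact this
  have h4 : W ω 2 = 1 := by
    rw [W, h.val 2 (by norm_num) le_rfl]
    norm_num
  rw [h3, h4] at h5
  linarith

lemma Bd.toW (h : IsBuchstab ω) {a l c0 c1 c2 c3 c4 : ℝ}
    (H : Bd (J 1 (W ω)) a l c0 c1 c2 c3 c4) (ha : 2 ≤ a) :
    Bd (W ω) a l (1 + c0) c1 c2 c3 c4 := by
  intro t ht
  have h1 := H t ht
  rw [W_eq h (by linarith [ht.1])]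
  linarith

lemma W_one (h : IsBuchstab ω) (a l : ℝ) (ha : 1 ≤ a ∧ a + l ≤ 2) :
    Bd (W ω) a l 1 0 0 0 0 := by
  intro t ht
  have h1 : 1 ≤ a + t := by linarith [ht.1, ha.1]
  rw [W, h.val _ h1 (by linarith [ht.2, ha.2]), mul_one_div_cancel (by linarith)]
  simp

/-! ### Numerical majorants -/

/-- `J 1 W = W - 1` on `[2, 5]`, in pieces of length `1/2`. -/
lemma J1_bounds (h : IsBuchstab ω) :
    Bd (J 1 (W ω)) 2 0.5 0 1 (-0.48148) 0.24692 (-0.07407) ∧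
    Bd (J 1 (W ω)) 2.5 0.5 0.40587 0.66667 (-0.21875) 0.08334 (-0.02083) ∧
    Bd (J 1 (W ω)) 3 0.5 0.69364 0.5 0.125 (-0.11176) 0.04235 ∧
    Bd (J 1 (W ω)) 3.5 0.5 0.96357 0.56235 0.02087 (-0.03251) 0.01144 ∧
    Bd (J 1 (W ω)) 4 0.5 1.24662 0.56455 (-0.00949) 0.01097 (-0.0045) ∧
    Bd (J 1 (W ω)) 4.5 0.5 1.52762 0.56102 0.00046 0.00083 (-0.00089) := by
  have hW := W_contOn h
  have s0 : J 1 (W ω) 2 ≤ 0 := by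
    rw [show (2 : ℝ) = 1 + 1 by norm_num, J_start]
  have e0 := step one_pos hW (W_one h 1 0.5 (by norm_num)) 2 0 1 (-0.48148) 0.24692 (-0.07407)
    s0 (by norm_num) (by norm_num)
  have e1 := step one_pos hW (W_one h 1.5 0.5 (by norm_num)) 2.5 0.40587 0.66667 (-0.21875) 0.08334 (-0.02083)
    (e0.right _ _ (by norm_num) (by norm_num)) (by norm_num) (by norm_num)
  have e2 := step one_pos hW (e0.toW h (by norm_num)) 3 0.69364 0.5 0.125 (-0.11176) 0.04235
    (e1.right _ _ (by norm_num) (by norm_num)) (by norm_num) (by norm_num)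
  have e3 := step one_pos hW (e1.toW h (by norm_num)) 3.5 0.96357 0.56235 0.02087 (-0.03251) 0.01144
    (e2.right _ _ (by norm_num) (by norm_num)) (by norm_num) (by norm_num)
  have e4 := step one_pos hW (e2.toW h (by norm_num)) 4 1.24662 0.56455 (-0.00949) 0.01097 (-0.0045)
    (e3.right _ _ (by norm_num) (by norm_num)) (by norm_num) (by norm_num)
  have e5 := step one_pos hW (e3.toW h (by norm_num)) 4.5 1.52762 0.56102 0.00046 0.00083 (-0.00089)
    (e4.right _ _ (by norm_num) (by norm_num)) (by norm_num) (by norm_num)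
  exact ⟨e0, e1, e2, e3, e4, e5⟩

/-- The bound `ω ≤ 0.56175` on `[4, ∞)`: it holds on `[4, 5]` by the quartic majorants, and
integrating the delay equation carries it from each unit interval to the next. -/
lemma W_le (h : IsBuchstab ω) {u : ℝ} (hu : 4 ≤ u) : W ω u ≤ 0.56175 * u := by
  have hW := W_contOn h
  have base : Bd (W ω) 4 1 (0.56175 * 4) 0.56175 0 0 0 := by
    obtain ⟨-, -, -, -, e4, e5⟩ := J1_bounds h
    intro t ht
    rcases le_total t 0.5 with hc | hc
    · have h1 : t ∈ Icc 0 (0.5 : ℝ) := ⟨ht.1, hc⟩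
      have h2 := e4 t h1
      have h3 := W_eq h (v := 4 + t) (by linarith [ht.1])
      have h4 := quartic_nonneg (h := 0.5) (d0 := 0.00038) (d1 := (-0.0028))
        (d2 := 0.00949) (d3 := (-0.01097)) (d4 := 0.0045) (by norm_num) h1 (by norm_num)
      linarith
    · have h1 : t - 0.5 ∈ Icc 0 (0.5 : ℝ) := ⟨by linarith, by linarith [ht.2]⟩
      have h2 := e5 _ h1
      rw [show 4.5 + (t - 0.5) = 4 + t by ring] at h2
      have h3 := W_eq h (v := 4 + t) (by linarith [ht.1])
      have h4 := quartic_nonneg (h := 0.5) (d0 := 0.000255) (d1 := 0.00073)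
        (d2 := (-0.00046)) (d3 := (-0.00083)) (d4 := 0.00089) (by norm_num) h1 (by norm_num)
      linarith
  have ind : ∀ n : ℕ, Bd (W ω) (4 + n) 1 (0.56175 * (4 + n)) 0.56175 0 0 0 := by
    intro n
    induction n with
    | zero => simpa using base
    | succ n ih =>
      have hn : (0 : ℝ) ≤ n := n.cast_nonneg
      have h1 := (ih 1 (by norm_num)).trans_eq
        (show _ = 0.56175 * (4 + ((n + 1 : ℕ) : ℝ)) by push_cast; ring)
      rw [show (4 : ℝ) + n + 1 = 4 + ((n + 1 : ℕ) : ℝ) by push_cast; ring,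
        W_eq h (by push_cast; linarith)] at h1
      have h2 := step one_pos hW ih (4 + ((n + 1 : ℕ) : ℝ)) _ 0.56175 0 0 0 (le_sub_iff_add_le'.2 h1)
        ⟨by linarith, by norm_num, by push_cast; ring⟩
        (by refine ⟨?_, ?_, ?_, ?_, ?_⟩ <;> apply le_of_eq <;> ring)
      have h3 := h2.toW h (by push_cast; linarith)
      rwa [add_sub_cancel] at h3
  have hf := Nat.floor_le (show 0 ≤ u - 4 by linarith)
  have hf' := Nat.lt_floor_add_one (u - 4)
  have := ind ⌊u - 4⌋₊ (u - 4 - ⌊u - 4⌋₊) ⟨by linarith, by linarith⟩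
  rw [show (4 : ℝ) + ⌊u - 4⌋₊ + (u - 4 - ⌊u - 4⌋₊) = u by ring] at this
  linarith

lemma J1_linear (h : IsBuchstab ω) (a l : ℝ) (ha : 4 ≤ a) :
    Bd (J 1 (W ω)) a l (0.56175 * a - 1) 0.56175 0 0 0 := by
  intro t ht
  have h1 := W_le h (u := a + t) (by linarith [ht.1])
  have h2 := W_eq h (v := a + t) (by linarith [ht.1])
  linarith

lemma J2_bounds (h : IsBuchstab ω) :
    Bd (J 2 (J 1 (W ω))) 3 0.5 0 0 0.25 (-0.15176) 0.05235 ∧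
    Bd (J 2 (J 1 (W ω))) 3.5 0.5 0.04681 0.16235 0.10087 (-0.05325) 0.01588 ∧
    Bd (J 2 (J 1 (W ω))) 4 0.5 0.14754 0.23122 0.0459 (-0.00069) (-0.00256) ∧
    Bd (J 2 (J 1 (W ω))) 4.5 0.5 0.27438 0.27531 0.0412 (-0.00661) 0.00023 ∧
    Bd (J 2 (J 1 (W ω))) 5 1 0.42153 0.31175 0.03125 (-0.005) 0.00063 ∧
    Bd (J 2 (J 1 (W ω))) 6 2 0.76016 0.36175 0.02 (-0.00244) 0.00021 ∧
    Bd (J 2 (J 1 (W ω))) 8 4 1.5475 0.4214 0.00878 (-0.00052) 0.00002 := by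
  have c1 := J_contOn one_pos (W_contOn h)
  rw [one_add_one_eq_two] at c1
  obtain ⟨p0, p1, p2, p3, -⟩ := J1_bounds h
  have s0 : J 2 (J 1 (W ω)) 3 ≤ 0 := by
    rw [show (3 : ℝ) = 2 + 1 by norm_num, J_start]
  have e0 := step two_pos c1 p0 3 0 0 0.25 (-0.15176) 0.05235
    s0 (by norm_num) (by norm_num)
  have e1 := step two_pos c1 p1 3.5 0.04681 0.16235 0.10087 (-0.05325) 0.01588
    (e0.right _ _ (by norm_num) (by norm_num)) (by norm_num) (by norm_num)
  have e2 := step two_pos c1 p2 4 0.14754 0.23122 0.0459 (-0.00069) (-0.00256)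
    (e1.right _ _ (by norm_num) (by norm_num)) (by norm_num) (by norm_num)
  have e3 := step two_pos c1 p3 4.5 0.27438 0.27531 0.0412 (-0.00661) 0.00023
    (e2.right _ _ (by norm_num) (by norm_num)) (by norm_num) (by norm_num)
  have e4 := step two_pos c1 (J1_linear h 4 1 (by norm_num)) 5 0.42153 0.31175 0.03125 (-0.005) 0.00063
    (e3.right _ _ (by norm_num) (by norm_num)) (by norm_num) (by norm_num)
  have e5 := step two_pos c1 (J1_linear h 5 2 (by norm_num)) 6 0.76016 0.36175 0.02 (-0.00244) 0.00021
    (e4.right _ _ (by norm_num) (by norm_num)) (by norm_num) (by norm_num)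
  have e6 := step two_pos c1 (J1_linear h 7 4 (by norm_num)) 8 1.5475 0.4214 0.00878 (-0.00052) 0.00002
    (e5.right _ _ (by norm_num) (by norm_num)) (by norm_num) (by norm_num)
  exact ⟨e0, e1, e2, e3, e4, e5, e6⟩

lemma J3_bounds (h : IsBuchstab ω) :
    Bd (J 3 (J 2 (J 1 (W ω)))) 4 0.5 0 0 0.00172 0.02054 (-0.00749) ∧
    Bd (J 3 (J 2 (J 1 (W ω)))) 4.5 0.5 0.00253 0.01338 0.02172 0.00376 (-0.00203) ∧
    Bd (J 3 (J 2 (J 1 (W ω)))) 5 0.5 0.015 0.03691 0.02419 0 (-0.00024) ∧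
    Bd (J 3 (J 2 (J 1 (W ω)))) 5.5 0.5 0.03949 0.06098 0.02383 (-0.00053) (-0.00019) ∧
    Bd (J 3 (J 2 (J 1 (W ω)))) 6 1 0.07586 0.08431 0.02281 (-0.00108) 0.00001 ∧
    Bd (J 3 (J 2 (J 1 (W ω)))) 7 2 0.18191 0.1267 0.01959 (-0.00106) 0.00004 ∧
    Bd (J 3 (J 2 (J 1 (W ω)))) 9 4 0.50583 0.19344 0.01425 (-0.00075) 0.00003 := by
  have c1 := J_contOn one_pos (W_contOn h)
  rw [one_add_one_eq_two] at c1
  have c2 := J_contOn two_pos c1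
  rw [two_add_one_eq_three] at c2
  obtain ⟨p0, p1, p2, p3, p4, p5, p6⟩ := J2_bounds h
  have s0 : J 3 (J 2 (J 1 (W ω))) 4 ≤ 0 := by
    rw [show (4 : ℝ) = 3 + 1 by norm_num, J_start]
  have e0 := step three_pos c2 p0 4 0 0 0.00172 0.02054 (-0.00749)
    s0 (by norm_num) (by norm_num)
  have e1 := step three_pos c2 p1 4.5 0.00253 0.01338 0.02172 0.00376 (-0.00203)
    (e0.right _ _ (by norm_num) (by norm_num)) (by norm_num) (by norm_num)
  have e2 := step three_pos c2 p2 5 0.015 0.03691 0.02419 0 (-0.00024)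
    (e1.right _ _ (by norm_num) (by norm_num)) (by norm_num) (by norm_num)
  have e3 := step three_pos c2 p3 5.5 0.03949 0.06098 0.02383 (-0.00053) (-0.00019)
    (e2.right _ _ (by norm_num) (by norm_num)) (by norm_num) (by norm_num)
  have e4 := step three_pos c2 p4 6 0.07586 0.08431 0.02281 (-0.00108) 0.00001
    (e3.right _ _ (by norm_num) (by norm_num)) (by norm_num) (by norm_num)
  have e5 := step three_pos c2 p5 7 0.18191 0.1267 0.01959 (-0.00106) 0.00004
    (e4.right _ _ (by norm_num) (by norm_num)) (by norm_num) (by norm_num)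
  have e6 := step three_pos c2 p6 9 0.50583 0.19344 0.01425 (-0.00075) 0.00003
    (e5.right _ _ (by norm_num) (by norm_num)) (by norm_num) (by norm_num)
  exact ⟨e0, e1, e2, e3, e4, e5, e6⟩

lemma J4_bound (h : IsBuchstab ω) : J 4 (J 3 (J 2 (J 1 (W ω)))) 14 ≤ 0.45203 := by
  have c1 := J_contOn one_pos (W_contOn h)
  rw [one_add_one_eq_two] at c1
  have c2 := J_contOn two_pos c1
  rw [two_add_one_eq_three] at c2
  have c3 := J_contOn three_pos c2
  rw [three_add_one_eq_four] at c3
  obtain ⟨p0, p1, p2, p3, p4, p5, p6⟩ := J3_bounds h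
  have s0 : J 4 (J 3 (J 2 (J 1 (W ω)))) 5 ≤ 0 := by
    rw [show (5 : ℝ) = 4 + 1 by norm_num, J_start]
  have e0 := step four_pos c3 p0 5 0 0 0 0.00035 0.00061
    s0 (by norm_num) (by norm_num)
  have e1 := step four_pos c3 p1 5.5 0.00009 0.00058 0.00136 0.00155 (-0.00019)
    (e0.right _ _ (by norm_num) (by norm_num)) (by norm_num) (by norm_num)
  have e2 := step four_pos c3 p2 6 0.00091 0.003 0.0034 0.00115 (-0.00014)
    (e1.right _ _ (by norm_num) (by norm_num)) (by norm_num) (by norm_num)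
  have e3 := step four_pos c3 p3 6.5 0.0034 0.00718 0.0049 0.00084 (-0.00011)
    (e2.right _ _ (by norm_num) (by norm_num)) (by norm_num) (by norm_num)
  have e4 := step four_pos c3 p4 7 0.00832 0.01265 0.006 0.00055 (-0.00007)
    (e3.right _ _ (by norm_num) (by norm_num)) (by norm_num) (by norm_num)
  have e5 := step four_pos c3 p5 8 0.02745 0.02599 0.00728 0.00017 (-0.00002)
    (e4.right _ _ (by norm_num) (by norm_num)) (by norm_num) (by norm_num)
  have e6 := step four_pos c3 p6 10 0.10959 0.05621 0.00775 (-0.0001) 0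
    (e5.right _ _ (by norm_num) (by norm_num)) (by norm_num) (by norm_num)
  exact e6.right _ _ (by norm_num) (by norm_num)

/-! ### The fourfold integral -/

lemma fourfold_eq (h : IsBuchstab ω) :
    (∫ t₁ in (1/14 : ℝ)..(1/5 : ℝ), ∫ t₂ in t₁..((1 - t₁) / 4),
        ∫ t₃ in t₂..((1 - t₁ - t₂) / 3), ∫ t₄ in t₃..((1 - t₁ - t₂ - t₃) / 2),
          ω ((1 - t₁ - t₂ - t₃ - t₄) / t₄) / (t₁ * t₂ * t₃ * t₄ ^ 2)) =
      J 4 (J 3 (J 2 (J 1 (W ω)))) 14 := by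
  have c0 := W_contOn h
  have c1 := J_contOn one_pos c0
  rw [one_add_one_eq_two] at c1
  have c2 := J_contOn two_pos c1
  rw [two_add_one_eq_three] at c2
  have c3 := J_contOn three_pos c2
  rw [three_add_one_eq_four] at c3
  have L1 : ∀ s t₁ t₂ t₃ : ℝ, 0 < t₃ → 3 * t₃ ≤ s →
      ∫ t₄ in t₃..((s - t₃) / 2), ω ((s - t₃ - t₄) / t₄) / (t₁ * t₂ * t₃ * t₄ ^ 2) =
        (t₁ * t₂)⁻¹ * (J 1 (W ω) ((s - t₃) / t₃) / (t₃ * (s - t₃))) := by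
    intro s t₁ t₂ t₃ h3 hs
    have e := layer one_pos c0 (s := s - t₃) (a := t₃) (by linarith) h3 (by linarith)
    rw [one_add_one_eq_two] at e
    calc _ = ∫ t₄ in t₃..((s - t₃) / 2), (t₁ * t₂ * t₃)⁻¹ *
          (W ω ((s - t₃ - t₄) / t₄) / (t₄ * (s - t₃ - t₄))) := by
          apply integral_congr
          intro t ht
          rw [uIcc_of_le (by linarith)] at ht
          have h4 : 0 < t := h3.trans_le ht.1
          have h5 : s - t₃ - t ≠ 0 := by linarith [ht.2]
          simp only [W]
          field_simp
      _ = _ := by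
          rw [intervalIntegral.integral_const_mul, e]
          simp only [div_eq_mul_inv, mul_inv]
          ring
  have L2 : ∀ s t₁ t₂ : ℝ, 0 < t₂ → 4 * t₂ ≤ s →
      ∫ t₃ in t₂..((s - t₂) / 3), ∫ t₄ in t₃..((s - t₂ - t₃) / 2),
        ω ((s - t₂ - t₃ - t₄) / t₄) / (t₁ * t₂ * t₃ * t₄ ^ 2) =
        t₁⁻¹ * (J 2 (J 1 (W ω)) ((s - t₂) / t₂) / (t₂ * (s - t₂))) := by
    intro s t₁ t₂ h2 hs
    have e := layer two_pos c1 (s := s - t₂) (a := t₂) (by linarith) h2 (by linarith)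
    rw [two_add_one_eq_three] at e
    calc _ = ∫ t₃ in t₂..((s - t₂) / 3), (t₁ * t₂)⁻¹ *
          (J 1 (W ω) ((s - t₂ - t₃) / t₃) / (t₃ * (s - t₂ - t₃))) := by
          apply integral_congr
          intro t ht
          rw [uIcc_of_le (by linarith)] at ht
          exact L1 (s - t₂) t₁ t₂ t (h2.trans_le ht.1) (by linarith [ht.2])
      _ = _ := by
          rw [intervalIntegral.integral_const_mul, e]
          simp only [div_eq_mul_inv, mul_inv]
          ring
  have L3 : ∀ t₁ : ℝ, 0 < t₁ → 5 * t₁ ≤ 1 →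
      ∫ t₂ in t₁..((1 - t₁) / 4), ∫ t₃ in t₂..((1 - t₁ - t₂) / 3),
        ∫ t₄ in t₃..((1 - t₁ - t₂ - t₃) / 2),
          ω ((1 - t₁ - t₂ - t₃ - t₄) / t₄) / (t₁ * t₂ * t₃ * t₄ ^ 2) =
        J 3 (J 2 (J 1 (W ω))) ((1 - t₁) / t₁) / (t₁ * (1 - t₁)) := by
    intro t₁ h1 hs
    have e := layer three_pos c2 (s := 1 - t₁) (a := t₁) (by linarith) h1 (by linarith)
    rw [three_add_one_eq_four] at e
    calc _ = ∫ t₂ in t₁..((1 - t₁) / 4), t₁⁻¹ *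
          (J 2 (J 1 (W ω)) ((1 - t₁ - t₂) / t₂) / (t₂ * (1 - t₁ - t₂))) := by
          apply integral_congr
          intro t ht
          rw [uIcc_of_le (by linarith)] at ht
          exact L2 (1 - t₁) t₁ t (h1.trans_le ht.1) (by linarith [ht.2])
      _ = _ := by
          rw [intervalIntegral.integral_const_mul, e]
          simp only [div_eq_mul_inv, mul_inv]
          ring
  have e := layer four_pos c3 (s := 1) (a := 1 / 14) one_pos (by norm_num) (by norm_num)
  rw [show (4 : ℝ) + 1 = 5 by norm_num, show (1 : ℝ) / (1 / 14) = 14 by norm_num, div_one] at e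
  rw [← e]
  apply integral_congr
  intro t ht
  rw [uIcc_of_le (by norm_num)] at ht
  exact L3 t (by linarith [ht.1]) (by linarith [ht.2])

lemma lt_log_bound : (0.45203 : ℝ) < Real.log (14 * (1 / 4 - 1 / 15.1) - 1) := by
  rw [Real.lt_log_iff_exp_lt (by norm_num)]
  refine (Real.exp_bound' (x := 0.45203) (n := 6) (by norm_num) (by norm_num) (by norm_num)).trans_lt ?_
  norm_num [Finset.sum_range_succ, Nat.factorial]

end BuchstabT4

/-- The numerical inequality `T₄ < log(14(1/4 - 1/15.1) - 1)` for the fourfold Buchstab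
integral `T₄`. -/
theorem T4_numerical (ω : ℝ → ℝ) (hω_cont : ContinuousOn ω (Set.Ici 1))
    (hω_val : ∀ v : ℝ, 1 ≤ v → v ≤ 2 → ω v = 1 / v)
    (hω_deriv : ∀ v : ℝ, 2 < v → HasDerivAt ω ((ω (v - 1) - ω v) / v) v) :
    (∫ t₁ in (1/14 : ℝ)..(1/5 : ℝ), ∫ t₂ in t₁..((1 - t₁) / 4),
        ∫ t₃ in t₂..((1 - t₁ - t₂) / 3), ∫ t₄ in t₃..((1 - t₁ - t₂ - t₃) / 2),
          ω ((1 - t₁ - t₂ - t₃ - t₄) / t₄) / (t₁ * t₂ * t₃ * t₄ ^ 2)) <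
      Real.log (14 * (1 / 4 - 1 / 15.1) - 1) := by
  have h : BuchstabT4.IsBuchstab ω := ⟨hω_cont, hω_val, hω_deriv⟩
  rw [BuchstabT4.fourfold_eq h]
  exact (BuchstabT4.J4_bound h).trans_lt BuchstabT4.lt_log_bound
end

section
/- Let ω be the Buchstab function. Then T₅ < log(12·(1/4 − 1/12.4) − 1), T₆ < log(12·(1/4 − 1/12.03) − 1), and T₇ < log(12·(1/4 − 1/12.01) − 1). -/
/-!
The `r`-fold integral collapses to iterated one-dimensional integrals. Put `R = 1 - s`. By
homogeneity `buchstabIntegral ω k a s = G k (R / a) / R`, and the substitution `v = (R - t) / t`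
gives `G 1 u = ∫ v in 1..u-1, ω v = u ω(u) - 1` and
`G (k + 1) u = ∫ v in k+1..u-1, G k v / v`. The three quantities to be bounded are `G 5 12`,
`G 6 12` and `G 7 12`.

The functions `G k` are majorized one after the other by explicit polynomials: for `0 ≤ y ≤ 6`,
`G k (k + 1 + y) ≤ y ^ k * r_k(y)`. If the derivative of `y ^ (k + 1) * r_(k+1)(y)` is at least
`y ^ k * r_k(y) / (k + 1 + y)`, the bound for `k` implies the bound for `k + 1`
(`PolyMajorizes.step`); after cancelling `y ^ k` this is one polynomial inequality on `[0, 6]`,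
certified piecewise by nonnegative coefficients in the Bernstein basis. The coefficients
come from interpolating `r_k(y) / (k + 1 + y)` at Chebyshev nodes, scaling the result up slightly,
multiplying by `y ^ k` and integrating.

The start (`mul_omega_sub_one_le`) uses `(u ω(u))' = ω(u - 1)`, which is `1 / (u - 1)` on `(2, 3)`
and at most `0.568` afterwards (`omega_le`). The final bounds are `G 5 12 ≤ 0.03135`,
`G 6 12 ≤ 0.00195` and `G 7 12 ≤ 0.00006`, against logarithms of about `0.03174`, `0.00249` and
`0.00083`.
-/

/-- `buchstabIntegral ω k a s` is the `k`-fold iterated integral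
`∫_a^{(1-s)/(k+1)} ∫_{t₁}^{(1-s-t₁)/k} ⋯ ω((1-s-t₁-⋯-t_k)/t_k)/(t₁⋯t_{k-1} t_k²) dt_k ⋯ dt₁`,
so that `T_r = buchstabIntegral ω r (1/12) 0` for `r ≥ 5`. -/
noncomputable def buchstabIntegral (ω : ℝ → ℝ) : ℕ → ℝ → ℝ → ℝ
  | 0, _, _ => 0
  | 1, a, s => ∫ t in a..((1 - s) / 2), ω ((1 - s - t) / t) / t ^ 2
  | (k + 2), a, s => ∫ t in a..((1 - s) / (k + 3)), buchstabIntegral ω (k + 1) t (s + t) / t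

/-! ### Polynomials given by coefficient lists -/

/-- The polynomial `∑ aᵢ yⁱ` with coefficient list `[a₀, a₁, …]`. -/
noncomputable def val : List ℝ → ℝ → ℝ
  | [], _ => 0
  | a :: l, y => a + y * val l y

/-- The list `[m a₀, (m + 1) a₁, (m + 2) a₂, …]`; this is the effect of differentiation on the
coefficients of `y ^ m * val l y`. -/
noncomputable def wt : ℝ → List ℝ → List ℝ
  | _, [] => []
  | m, a :: l => m * a :: wt (m + 1) l

theorem continuous_val (l : List ℝ) : Continuous (val l) := by
  induction l with
  | nil => simpa [val] using continuous_const
  | cons a l ih =>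
    have : val (a :: l) = fun y => a + y * val l y := by ext y; rfl
    rw [this]; fun_prop

theorem hasDerivAt_pow_mul_val (l : List ℝ) (k : ℕ) (y : ℝ) :
    HasDerivAt (fun y => y ^ (k + 1) * val l y) (y ^ k * val (wt (k + 1) l) y) y := by
  induction l generalizing k with
  | nil => simpa [val, wt] using hasDerivAt_const y (0 : ℝ)
  | cons a l ih =>
    have h1 := ((hasDerivAt_pow (k + 1) y).const_mul a).add (ih (k + 1))
    have e : (fun y => y ^ (k + 1) * val (a :: l) y) =
        (fun y => a * y ^ (k + 1)) + fun y => y ^ (k + 1 + 1) * val l y := by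
      ext z; simp only [val, Pi.add_apply]; ring
    rw [e]
    refine h1.congr_deriv ?_
    simp only [val, wt]
    push_cast
    ring

/-- The Bernstein terms on `[a, b]`. Each polynomial inequality on an interval below holds
because, after cutting the interval into pieces, the difference of the two sides is a nonnegative
combination of these terms on each piece. -/
theorem bernstein_term_nonneg {a b y : ℝ} (ha : a ≤ y) (hb : y ≤ b) (i j : ℕ) :
    0 ≤ (y - a) ^ i * (b - y) ^ j :=
  mul_nonneg (pow_nonneg (sub_nonneg.2 ha) _) (pow_nonneg (sub_nonneg.2 hb) _)

/-! ### The majorants and their polynomial inequalities -/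

/-- Coefficients of `r` in the majorant `y ^ 1 * r y` of `G 1` at `2 + y`. -/
noncomputable def c1 : List ℝ :=
  [1.02184, -0.53153, 0.299856, -0.0846391,
   0.01158, -0.000610692]

/-- Coefficients of `r` in the majorant `y ^ 2 * r y` of `G 2` at `3 + y`. -/
noncomputable def c2 : List ℝ :=
  [0.256063, -0.169731, 0.0893701, -0.0315532,
   0.00719196, -0.00101596, 0.0000808154, -0.00000276292]

/-- Coefficients of `r` in the majorant `y ^ 3 * r y` of `G 3` at `4 + y`. -/
noncomputable def c3 : List ℝ :=
  [0.0285624, -0.0210351, 0.0107135, -0.00375786,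
   0.000868217, -0.000124799, 0.0000100526, -0.000000345367]

/-- Coefficients of `r` in the majorant `y ^ 4 * r y` of `G 4` at `5 + y`. -/
noncomputable def c4 : List ℝ :=
  [0.0017934, -0.0014027, 0.000702827, -0.000242004,
   0.0000552919, -0.00000789676, 0.000000633426, -0.0000000216928]

/-- Coefficients of `r` in the majorant `y ^ 5 * r y` of `G 5` at `6 + y`. -/
noncomputable def c5 : List ℝ :=
  [0.0000720931, -0.0000586439, 0.0000291156, -0.00000986554,
   0.00000222565, -0.000000315093, 0.0000000251236, -0.000000000856802]

/-- Coefficients of `r` in the majorant `y ^ 6 * r y` of `G 6` at `7 + y`. -/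
noncomputable def c6 : List ℝ :=
  [0.00000201292, -0.00000168341, 0.000000831026, -0.000000277982,
   0.0000000620135, -0.00000000870812, 0.000000000690392, -0.0000000000234516]

/-- Coefficients of `r` in the majorant `y ^ 7 * r y` of `G 7` at `8 + y`. -/
noncomputable def c7 : List ℝ :=
  [0.0000000412958, -0.0000000352567, 0.0000000173379, -0.00000000573997,
   0.00000000126835, -0.000000000176836, 0.0000000000139491, -0.000000000000472159]

/-- The derivative of `y * val c1 y` is at least `1 / (1 + y)`. -/
theorem cert_one_left {y : ℝ} (h0 : 0 ≤ y) (h1 : y ≤ 1) :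
    1 ≤ (1 + y) * val (wt 1 c1) y := by
  simp only [val, wt, c1]
  rcases le_total y (1/2) with h2 | h2
  · have B := bernstein_term_nonneg h0 h2
    linarith [B 0 6, B 1 5, B 2 4, B 3 3, B 4 2, B 5 1, B 6 0]
  have B := bernstein_term_nonneg h2 h1
  linarith [B 0 6, B 1 5, B 2 4, B 3 3, B 4 2, B 5 1, B 6 0]

/-- `y * val c1 y` lies above the line of slope `0.568` through its value at `1`. -/
theorem cert_one_right {y : ℝ} (h0 : 1 ≤ y) (h1 : y ≤ 6) :
    val c1 1 + 0.568 * (y - 1) ≤ y * val c1 y := by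
  simp only [val, c1]
  rcases le_total y (13/8) with h2 | h2
  · have B := bernstein_term_nonneg h0 h2
    linarith [B 0 6, B 1 5, B 2 4, B 3 3, B 4 2, B 5 1, B 6 0]
  rcases le_total y (9/4) with h3 | h3
  · have B := bernstein_term_nonneg h2 h3
    linarith [B 0 6, B 1 5, B 2 4, B 3 3, B 4 2, B 5 1, B 6 0]
  rcases le_total y (7/2) with h4 | h4
  · have B := bernstein_term_nonneg h3 h4
    linarith [B 0 6, B 1 5, B 2 4, B 3 3, B 4 2, B 5 1, B 6 0]
  have B := bernstein_term_nonneg h4 h1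
  linarith [B 0 6, B 1 5, B 2 4, B 3 3, B 4 2, B 5 1, B 6 0]

theorem cert_2 {y : ℝ} (h0 : 0 ≤ y) (h1 : y ≤ 6) :
    val c1 y ≤ (2 + y) * val (wt 2 c2) y := by
  simp only [val, wt, c1, c2]
  rcases le_total y (3/2) with h2 | h2
  · have B := bernstein_term_nonneg h0 h2
    linarith [B 0 8, B 1 7, B 2 6, B 3 5, B 4 4, B 5 3, B 6 2, B 7 1, B 8 0]
  rcases le_total y 3 with h3 | h3
  · have B := bernstein_term_nonneg h2 h3
    linarith [B 0 8, B 1 7, B 2 6, B 3 5, B 4 4, B 5 3, B 6 2, B 7 1, B 8 0]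
  rcases le_total y (9/2) with h4 | h4
  · have B := bernstein_term_nonneg h3 h4
    linarith [B 0 8, B 1 7, B 2 6, B 3 5, B 4 4, B 5 3, B 6 2, B 7 1, B 8 0]
  have B := bernstein_term_nonneg h4 h1
  linarith [B 0 8, B 1 7, B 2 6, B 3 5, B 4 4, B 5 3, B 6 2, B 7 1, B 8 0]

theorem cert_3 {y : ℝ} (h0 : 0 ≤ y) (h1 : y ≤ 6) :
    val c2 y ≤ (3 + y) * val (wt 3 c3) y := by
  simp only [val, wt, c2, c3]
  rcases le_total y (3/2) with h2 | h2
  · have B := bernstein_term_nonneg h0 h2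
    linarith [B 0 8, B 1 7, B 2 6, B 3 5, B 4 4, B 5 3, B 6 2, B 7 1, B 8 0]
  rcases le_total y 3 with h3 | h3
  · have B := bernstein_term_nonneg h2 h3
    linarith [B 0 8, B 1 7, B 2 6, B 3 5, B 4 4, B 5 3, B 6 2, B 7 1, B 8 0]
  rcases le_total y (9/2) with h4 | h4
  · have B := bernstein_term_nonneg h3 h4
    linarith [B 0 8, B 1 7, B 2 6, B 3 5, B 4 4, B 5 3, B 6 2, B 7 1, B 8 0]
  have B := bernstein_term_nonneg h4 h1
  linarith [B 0 8, B 1 7, B 2 6, B 3 5, B 4 4, B 5 3, B 6 2, B 7 1, B 8 0]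

theorem cert_4 {y : ℝ} (h0 : 0 ≤ y) (h1 : y ≤ 6) :
    val c3 y ≤ (4 + y) * val (wt 4 c4) y := by
  simp only [val, wt, c3, c4]
  rcases le_total y (3/2) with h2 | h2
  · have B := bernstein_term_nonneg h0 h2
    linarith [B 0 8, B 1 7, B 2 6, B 3 5, B 4 4, B 5 3, B 6 2, B 7 1, B 8 0]
  rcases le_total y 3 with h3 | h3
  · have B := bernstein_term_nonneg h2 h3
    linarith [B 0 8, B 1 7, B 2 6, B 3 5, B 4 4, B 5 3, B 6 2, B 7 1, B 8 0]
  rcases le_total y (9/2) with h4 | h4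
  · have B := bernstein_term_nonneg h3 h4
    linarith [B 0 8, B 1 7, B 2 6, B 3 5, B 4 4, B 5 3, B 6 2, B 7 1, B 8 0]
  have B := bernstein_term_nonneg h4 h1
  linarith [B 0 8, B 1 7, B 2 6, B 3 5, B 4 4, B 5 3, B 6 2, B 7 1, B 8 0]

theorem cert_5 {y : ℝ} (h0 : 0 ≤ y) (h1 : y ≤ 6) :
    val c4 y ≤ (5 + y) * val (wt 5 c5) y := by
  simp only [val, wt, c4, c5]
  rcases le_total y 3 with h2 | h2
  · have B := bernstein_term_nonneg h0 h2
    linarith [B 0 8, B 1 7, B 2 6, B 3 5, B 4 4, B 5 3, B 6 2, B 7 1, B 8 0]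
  rcases le_total y (9/2) with h3 | h3
  · have B := bernstein_term_nonneg h2 h3
    linarith [B 0 8, B 1 7, B 2 6, B 3 5, B 4 4, B 5 3, B 6 2, B 7 1, B 8 0]
  have B := bernstein_term_nonneg h3 h1
  linarith [B 0 8, B 1 7, B 2 6, B 3 5, B 4 4, B 5 3, B 6 2, B 7 1, B 8 0]

theorem cert_6 {y : ℝ} (h0 : 0 ≤ y) (h1 : y ≤ 6) :
    val c5 y ≤ (6 + y) * val (wt 6 c6) y := by
  simp only [val, wt, c5, c6]
  rcases le_total y 3 with h2 | h2
  · have B := bernstein_term_nonneg h0 h2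
    linarith [B 0 8, B 1 7, B 2 6, B 3 5, B 4 4, B 5 3, B 6 2, B 7 1, B 8 0]
  rcases le_total y (9/2) with h3 | h3
  · have B := bernstein_term_nonneg h2 h3
    linarith [B 0 8, B 1 7, B 2 6, B 3 5, B 4 4, B 5 3, B 6 2, B 7 1, B 8 0]
  have B := bernstein_term_nonneg h3 h1
  linarith [B 0 8, B 1 7, B 2 6, B 3 5, B 4 4, B 5 3, B 6 2, B 7 1, B 8 0]

theorem cert_7 {y : ℝ} (h0 : 0 ≤ y) (h1 : y ≤ 6) :
    val c6 y ≤ (7 + y) * val (wt 7 c7) y := by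
  simp only [val, wt, c6, c7]
  rcases le_total y 3 with h2 | h2
  · have B := bernstein_term_nonneg h0 h2
    linarith [B 0 8, B 1 7, B 2 6, B 3 5, B 4 4, B 5 3, B 6 2, B 7 1, B 8 0]
  rcases le_total y (9/2) with h3 | h3
  · have B := bernstein_term_nonneg h2 h3
    linarith [B 0 8, B 1 7, B 2 6, B 3 5, B 4 4, B 5 3, B 6 2, B 7 1, B 8 0]
  have B := bernstein_term_nonneg h3 h1
  linarith [B 0 8, B 1 7, B 2 6, B 3 5, B 4 4, B 5 3, B 6 2, B 7 1, B 8 0]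

/-! ### Bounds for the Buchstab function -/

/-- `0.568` exceeds the root `0.567143…` of `x = exp (-x)`. -/
theorem neg_log_le : -Real.log 0.568 ≤ 0.568 := by
  have h := Real.sum_le_exp_of_nonneg (x := 0.568) (by norm_num) 5
  have h2 : (0.568 : ℝ)⁻¹ ≤ Real.exp 0.568 := by
    refine le_trans ?_ h
    norm_num [Finset.sum_range_succ, Nat.factorial]
  rw [← Real.log_inv]
  exact (Real.log_le_iff_le_exp (by norm_num)).2 h2

theorem log_le {w : ℝ} (hw : 0 < w) : Real.log w ≤ 0.568 * (w + 1) - 1 := by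
  have h := Real.log_le_sub_one_of_pos (x := 0.568 * w) (by positivity)
  rw [Real.log_mul (by norm_num) hw.ne'] at h
  linarith [neg_log_le]

section Buchstab

variable {ω : ℝ → ℝ}

theorem continuousOn_mul_omega (hc : ContinuousOn ω (Set.Ici 1)) :
    ContinuousOn (fun u => u * ω u) (Set.Ici 2) :=
  continuousOn_id.mul (hc.mono (Set.Ici_subset_Ici.2 (by norm_num)))

theorem hasDerivAt_mul_omega
    (hd : ∀ v : ℝ, 2 < v → HasDerivAt ω ((ω (v - 1) - ω v) / v) v) {u : ℝ} (hu : 2 < u) :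
    HasDerivAt (fun u => u * ω u) (ω (u - 1)) u := by
  refine ((hasDerivAt_id u).mul (hd u hu)).congr_deriv ?_
  have : u ≠ 0 := by positivity
  simp only [id]
  field_simp
  ring

/-- Comparison principle for `u ↦ u ω(u)`, whose derivative is `ω(u - 1)`. -/
theorem mul_omega_le_of_deriv (hc : ContinuousOn ω (Set.Ici 1))
    (hd : ∀ v : ℝ, 2 < v → HasDerivAt ω ((ω (v - 1) - ω v) / v) v)
    {p p' : ℝ → ℝ} {a b : ℝ} (ha : 2 ≤ a) (hab : a ≤ b)
    (hp : ∀ u ∈ Set.Icc a b, HasDerivAt p (p' u) u)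
    (hle : ∀ u ∈ Set.Ioo a b, ω (u - 1) ≤ p' u) :
    b * ω b - p b ≤ a * ω a - p a := by
  have hanti : AntitoneOn (fun u => u * ω u - p u) (Set.Icc a b) := by
    refine antitoneOn_of_hasDerivWithinAt_nonpos (f' := fun u => ω (u - 1) - p' u)
      (convex_Icc a b) ?_ ?_ ?_
    · refine ((continuousOn_mul_omega hc).mono fun x hx => ha.trans hx.1).sub ?_
      exact fun u hu => (hp u hu).continuousAt.continuousWithinAt
    · intro u hu
      rw [interior_Icc] at hu
      exact ((hasDerivAt_mul_omega hd (ha.trans_lt hu.1)).sub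
        (hp u ⟨hu.1.le, hu.2.le⟩)).hasDerivWithinAt
    · intro u hu
      rw [interior_Icc] at hu
      exact sub_nonpos.2 (hle u hu)
  exact hanti ⟨le_rfl, hab⟩ ⟨hab, le_rfl⟩ hab

/-- On `[2, 3]` one has `u ω(u) ≤ 1 + log(u - 1) ≤ 0.568 u`, the second inequality because
`w ↦ 0.568 (w + 1) - 1 - log w` has its minimum at `w = 1 / 0.568`. From there the slope of
`u ω(u)` never exceeds `0.568`. -/
theorem omega_le (hc : ContinuousOn ω (Set.Ici 1))
    (hv : ∀ v : ℝ, 1 ≤ v → v ≤ 2 → ω v = 1 / v)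
    (hd : ∀ v : ℝ, 2 < v → HasDerivAt ω ((ω (v - 1) - ω v) / v) v) {u : ℝ} (hu : 2 ≤ u) :
    ω u ≤ 0.568 := by
  have base : ∀ u : ℝ, 2 ≤ u → u ≤ 3 → u * ω u ≤ 0.568 * u := by
    intro u h2 h3
    have h := mul_omega_le_of_deriv hc hd (p := fun u => Real.log (u - 1))
      (p' := fun u => 1 / (u - 1)) le_rfl h2
      (fun x hx => ((hasDerivAt_id x).sub_const 1).log (by simp only [id]; linarith [hx.1]))
      (fun x hx => (hv _ (by linarith [hx.1]) (by linarith [hx.2])).le)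
    have h4 : Real.log (2 - 1) = 0 := by norm_num
    have h5 : ω 2 = 1 / 2 := hv 2 (by norm_num) le_rfl
    have h6 := log_le (w := u - 1) (by linarith)
    rw [h4, h5] at h
    linarith
  have key : ∀ n : ℕ, ∀ u : ℝ, 2 ≤ u → u ≤ 3 + n → u * ω u ≤ 0.568 * u := by
    intro n
    induction n with
    | zero => intro u h2 h3; exact base u h2 (by simpa using h3)
    | succ n ih =>
      intro u h2 h3
      push_cast at h3
      rcases le_total u 3 with h | h
      · exact base u h2 h
      have h := mul_omega_le_of_deriv hc hd (p := fun u => 0.568 * u)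
        (p' := fun _ => 0.568) (by norm_num) h
        (fun x _ => by simpa using (hasDerivAt_id x).const_mul (0.568 : ℝ))
        (fun x hx => by
          have := ih (x - 1) (by linarith [hx.1]) (by linarith [hx.2])
          rw [mul_comm] at this
          exact le_of_mul_le_mul_right this (by linarith [hx.1]))
      have := base 3 (by norm_num) le_rfl
      linarith
  obtain ⟨n, hn⟩ := exists_nat_ge u
  have := key n u hu (by linarith)
  rw [mul_comm] at this
  exact le_of_mul_le_mul_right this (by linarith)

/-- The function `u ω(u) - 1` on the left is `∫ v in 1..u-1, ω v`. Up to `u = 3` the bound follows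
by comparing derivatives, afterwards from `ω ≤ 0.568`. -/
theorem mul_omega_sub_one_le (hc : ContinuousOn ω (Set.Ici 1))
    (hv : ∀ v : ℝ, 1 ≤ v → v ≤ 2 → ω v = 1 / v)
    (hd : ∀ v : ℝ, 2 < v → HasDerivAt ω ((ω (v - 1) - ω v) / v) v) {u : ℝ} (hu : 2 ≤ u)
    (hu8 : u ≤ 8) : u * ω u - 1 ≤ (u - 2) * val c1 (u - 2) := by
  have base : ∀ u : ℝ, 2 ≤ u → u ≤ 3 → u * ω u - 1 ≤ (u - 2) * val c1 (u - 2) := by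
    intro u h2 h3
    have h := mul_omega_le_of_deriv hc hd (p := fun u => (u - 2) * val c1 (u - 2))
      (p' := fun u => val (wt 1 c1) (u - 2)) le_rfl h2
      (fun x _ => by
        have := hasDerivAt_pow_mul_val c1 0 (x - 2)
        simpa using this.comp_sub_const x 2)
      (fun x hx => by
        have h1 : 0 < x - 1 := by linarith [hx.1]
        rw [hv _ (by linarith [hx.1]) (by linarith [hx.2]), div_le_iff₀ h1]
        have := cert_one_left (y := x - 2) (by linarith [hx.1]) (by linarith [hx.2])
        rw [mul_comm]
        rwa [show 1 + (x - 2) = x - 1 by ring] at this)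
    have h5 : ω 2 = 1 / 2 := hv 2 (by norm_num) le_rfl
    rw [h5] at h
    norm_num at h
    linarith
  rcases le_total u 3 with h | h
  · exact base u hu h
  have h3 := base 3 (by norm_num) le_rfl
  have h := mul_omega_le_of_deriv hc hd (p := fun u => 0.568 * u)
    (p' := fun _ => 0.568) (by norm_num) h
    (fun x _ => by simpa using (hasDerivAt_id x).const_mul (0.568 : ℝ))
    (fun x hx => omega_le hc hv hd (by linarith [hx.1]))
  have hr := cert_one_right (y := u - 2) (by linarith) (by linarith)
  have e : (3 : ℝ) - 2 = 1 := by norm_num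
  rw [e, one_mul] at h3
  linarith

/-! ### The integral recursion -/

/-- `P` majorizes the `k`-fold integral: with `R = 1 - s` and `R / a = k + 1 + y`, `0 ≤ y ≤ 6`,
one has `R * buchstabIntegral ω k a s ≤ P y`. By homogeneity the left side depends only on
`R / a`. -/
def Majorizes (ω : ℝ → ℝ) (k : ℕ) (P : ℝ → ℝ) : Prop :=
  ∀ a s : ℝ, 0 < a → (k + 1) * a ≤ 1 - s → 1 - s ≤ (k + 7) * a →
    buchstabIntegral ω k a s ≤ P ((1 - s) / a - (k + 1)) / (1 - s)

theorem hasDerivAt_const_div (R : ℝ) {t : ℝ} (ht : t ≠ 0) :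
    HasDerivAt (fun t => R / t) (-R / t ^ 2) t := by
  have := (hasDerivAt_inv ht).const_mul R
  simp only [← div_eq_mul_inv] at this
  exact this.congr_deriv (by ring)

/-- The substitution `v = (1 - s - t) / t` turns the innermost integral into `∫ ω(v) dv`, which
is `u ω(u) - 1` between `1` and `u - 1`, divided by `1 - s`. -/
theorem buchstabIntegral_one (hc : ContinuousOn ω (Set.Ici 1))
    (hv : ∀ v : ℝ, 1 ≤ v → v ≤ 2 → ω v = 1 / v)
    (hd : ∀ v : ℝ, 2 < v → HasDerivAt ω ((ω (v - 1) - ω v) / v) v) {a s : ℝ} (ha : 0 < a)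
    (h : 2 * a ≤ 1 - s) :
    buchstabIntegral ω 1 a s = ((1 - s) / a * ω ((1 - s) / a) - 1) / (1 - s) := by
  have hR : 0 < 1 - s := by linarith
  have hab : a ≤ (1 - s) / 2 := by linarith
  have hmem : ∀ t ∈ Set.Icc a ((1 - s) / 2), 0 < t ∧ 2 ≤ (1 - s) / t := fun t ht => by
    have : 0 < t := ha.trans_le ht.1
    exact ⟨this, by rw [le_div_iff₀ this]; linarith [ht.2]⟩
  have key : ∫ t in a..((1 - s) / 2), ω ((1 - s - t) / t) / t ^ 2 =
      -ω ((1 - s) / ((1 - s) / 2)) / ((1 - s) / 2) - -ω ((1 - s) / a) / a := by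
    refine intervalIntegral.integral_eq_sub_of_hasDerivAt_of_le
      (f := fun t => -ω ((1 - s) / t) / t) hab ?_ ?_ ?_
    · refine ContinuousOn.div (ContinuousOn.neg (hc.comp ?_ ?_)) continuousOn_id
        fun t ht => (hmem t ht).1.ne'
      · exact continuousOn_const.div continuousOn_id fun t ht => (hmem t ht).1.ne'
      · exact fun t ht => le_trans (by norm_num) (hmem t ht).2
    · intro t ht
      have ht0 : 0 < t := ha.trans ht.1
      have hu : 2 < (1 - s) / t := by rw [lt_div_iff₀ ht0]; linarith [ht.2]
      have h1 : HasDerivAt (fun t => (1 - s) / t) (-(1 - s) / t ^ 2) t :=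
        hasDerivAt_const_div (1 - s) ht0.ne'
      have h2 := (((hd _ hu).comp t h1).neg).div (hasDerivAt_id t) ht0.ne'
      have e : (1 - s - t) / t = (1 - s) / t - 1 := by field_simp
      rw [e]
      refine h2.congr_deriv ?_
      simp only [id, Pi.neg_apply, Function.comp_apply]
      generalize ω ((1 - s) / t - 1) = A
      generalize ω ((1 - s) / t) = B
      have := hR.ne'
      have := ht0.ne'
      field_simp
      ring
    · refine ContinuousOn.intervalIntegrable_of_Icc hab ?_
      refine ContinuousOn.div (hc.comp ?_ ?_) (continuousOn_id.pow 2)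
        fun t ht => pow_ne_zero 2 (hmem t ht).1.ne'
      · exact (continuousOn_const.sub continuousOn_id).div continuousOn_id
          fun t ht => (hmem t ht).1.ne'
      · intro t ht
        have := (hmem t ht).1
        simp only [Set.mem_Ici]
        rw [le_div_iff₀ this]
        linarith [ht.2]
  have e : (1 - s) / ((1 - s) / 2) = 2 := by field_simp
  rw [buchstabIntegral, key, e, hv 2 (by norm_num) le_rfl]
  generalize ω ((1 - s) / a) = A
  have := hR.ne'
  field_simp
  ring

theorem majorizes_one (hc : ContinuousOn ω (Set.Ici 1))
    (hv : ∀ v : ℝ, 1 ≤ v → v ≤ 2 → ω v = 1 / v)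
    (hd : ∀ v : ℝ, 2 < v → HasDerivAt ω ((ω (v - 1) - ω v) / v) v) :
    Majorizes ω 1 (fun y => y ^ 1 * val c1 y) := by
  intro a s ha h1 h2
  rw [Nat.cast_one] at h1 h2
  have hR : 0 < 1 - s := by linarith
  rw [buchstabIntegral_one hc hv hd ha (by linarith)]
  have := mul_omega_sub_one_le hc hv hd (u := (1 - s) / a) (by rw [le_div_iff₀ ha]; linarith)
    (by rw [div_le_iff₀ ha]; linarith)
  have e : (1 - s) / a - (((1 : ℕ) : ℝ) + 1) = (1 - s) / a - 2 := by norm_num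
  simp only [e, pow_one]
  gcongr

/-- An interval integral is monotone in its integrand even without integrability of the smaller
function, as long as the larger one is nonnegative: a non-integrable integrand gives `0`. -/
theorem integral_le_of_le {f g : ℝ → ℝ} {a b : ℝ} (hab : a ≤ b)
    (hg : IntervalIntegrable g MeasureTheory.volume a b) (h0 : ∀ t ∈ Set.Icc a b, 0 ≤ g t)
    (h : ∀ t ∈ Set.Icc a b, f t ≤ g t) : ∫ t in a..b, f t ≤ ∫ t in a..b, g t := by
  by_cases hf : IntervalIntegrable f MeasureTheory.volume a b
  · exact intervalIntegral.integral_mono_on hab hf hg h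
  · rw [intervalIntegral.integral_undef hf]
    exact intervalIntegral.integral_nonneg hab h0

/-- In the variable `v = (1 - s) / t - 1` the recursion reads
`G (k + 2) u = ∫ G (k + 1) v / v dv` over `[k + 2, u - 1]`. Hence a `Q` with `Q 0 = 0` and
`Q' y ≥ P y / (k + 2 + y)` majorizes the next integral. -/
theorem Majorizes.step {k : ℕ} {P Q Q' : ℝ → ℝ} (hP : Majorizes ω (k + 1) P)
    (hP0 : ∀ y, 0 ≤ y → y ≤ 6 → 0 ≤ P y) (hQ : ∀ y, HasDerivAt Q (Q' y) y)
    (hQ' : Continuous Q') (hQ0 : Q 0 = 0)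
    (hle : ∀ y, 0 ≤ y → y ≤ 6 → P y ≤ (k + 2 + y) * Q' y) :
    Majorizes ω (k + 2) Q := by
  intro a s ha h1 h2
  push_cast at h1 h2 ⊢
  have hk : (0 : ℝ) ≤ k := Nat.cast_nonneg k
  have hk3 : (0 : ℝ) < k + 3 := by linarith
  have hR : 0 < 1 - s := lt_of_lt_of_le (by positivity) h1
  have hab : a ≤ (1 - s) / (k + 3) := by rw [le_div_iff₀ hk3]; linarith
  have hmem : ∀ t ∈ Set.Icc a ((1 - s) / (k + 3)), 0 < t ∧ (k + 3) * t ≤ 1 - s ∧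
      1 - s ≤ (k + 9) * t := fun t ht => by
    refine ⟨ha.trans_le ht.1, ?_, ?_⟩
    · have := ht.2
      rw [le_div_iff₀ hk3] at this
      linarith
    · refine h2.trans ?_
      have := mul_le_mul_of_nonneg_left ht.1 (by linarith : (0 : ℝ) ≤ k + 9)
      linarith
  have hy : ∀ t ∈ Set.Icc a ((1 - s) / (k + 3)),
      0 ≤ (1 - s) / t - (k + 3) ∧ (1 - s) / t - (k + 3) ≤ 6 := fun t ht => by
    obtain ⟨ht0, h3, h4⟩ := hmem t ht
    rw [← le_div_iff₀ ht0] at h3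
    rw [← div_le_iff₀ ht0] at h4
    constructor <;> linarith
  have hQ'0 : ∀ y, 0 ≤ y → y ≤ 6 → 0 ≤ Q' y := fun y h0 h6 => by
    have := (hP0 y h0 h6).trans (hle y h0 h6)
    exact nonneg_of_mul_nonneg_right this (by linarith)
  have hcont : ContinuousOn (fun t => Q' ((1 - s) / t - (k + 3)) / t ^ 2)
      (Set.Icc a ((1 - s) / (k + 3))) := by
    refine ContinuousOn.div (hQ'.comp_continuousOn ?_) (continuousOn_id.pow 2)
      fun t ht => pow_ne_zero 2 (hmem t ht).1.ne'
    exact (continuousOn_const.div continuousOn_id fun t ht => (hmem t ht).1.ne').sub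
      continuousOn_const
  have hint := hcont.intervalIntegrable_of_Icc (μ := MeasureTheory.volume) hab
  have hval : ∫ t in a..((1 - s) / (k + 3)), Q' ((1 - s) / t - (k + 3)) / t ^ 2 =
      Q ((1 - s) / a - (k + 3)) / (1 - s) := by
    have := intervalIntegral.integral_eq_sub_of_hasDerivAt
      (f := fun t => -Q ((1 - s) / t - (k + 3)) / (1 - s))
      (f' := fun t => Q' ((1 - s) / t - (k + 3)) / t ^ 2)
      (a := a) (b := (1 - s) / (k + 3)) ?_ hint
    · rw [this]
      have e : (1 - s) / ((1 - s) / (k + 3)) - (k + 3 : ℝ) = 0 := by field_simp; ring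
      rw [e, hQ0]
      ring
    · intro t ht
      rw [Set.uIcc_of_le hab] at ht
      have ht0 := (hmem t ht).1
      have h1 : HasDerivAt (fun t => (1 - s) / t - (k + 3)) (-(1 - s) / t ^ 2) t :=
        (hasDerivAt_const_div (1 - s) ht0.ne').sub_const _
      have h2 := (((hQ _).comp t h1).neg).div_const (1 - s)
      refine h2.congr_deriv ?_
      have := hR.ne'
      field_simp
  rw [buchstabIntegral, show (k : ℝ) + 2 + 1 = k + 3 by ring, ← hval]
  have hg0 : ∀ t ∈ Set.Icc a ((1 - s) / (k + 3)),
      0 ≤ Q' ((1 - s) / t - (k + 3)) / t ^ 2 := fun t ht =>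
    div_nonneg (hQ'0 _ (hy t ht).1 (hy t ht).2) (by positivity)
  refine integral_le_of_le hab hint hg0 fun t ht => ?_
  obtain ⟨ht0, h3, h4⟩ := hmem t ht
  obtain ⟨hy0, hy6⟩ := hy t ht
  have hRt : 0 < 1 - s - t := by nlinarith
  have hb := hP t (s + t) ht0 (by push_cast; linarith) (by push_cast; linarith)
  have hl := hle _ hy0 hy6
  push_cast at hb
  have e1 : 1 - (s + t) = 1 - s - t := by ring
  have e2 : (1 - s - t) / t - ((k : ℝ) + 1 + 1) = (1 - s) / t - (k + 3) := by field_simp; ring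
  have e3 : (k : ℝ) + 2 + ((1 - s) / t - (k + 3)) = (1 - s - t) / t := by field_simp; ring
  rw [e1, e2] at hb
  rw [e3] at hl
  calc buchstabIntegral ω (k + 1) t (s + t) / t
      ≤ (P ((1 - s) / t - (k + 3)) / (1 - s - t)) / t := by gcongr
    _ ≤ ((1 - s - t) / t * Q' ((1 - s) / t - (k + 3)) / (1 - s - t)) / t := by gcongr
    _ = Q' ((1 - s) / t - (k + 3)) / t ^ 2 := by field_simp

/-- Majorization by a polynomial `y ^ k * val l y` together with the sign condition needed to
iterate `Majorizes.step`. -/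
def PolyMajorizes (ω : ℝ → ℝ) (k : ℕ) (l : List ℝ) : Prop :=
  Majorizes ω k (fun y => y ^ k * val l y) ∧ ∀ y, 0 ≤ y → y ≤ 6 → 0 ≤ y ^ k * val l y

/-- The sign follows by monotonicity: `h` says that the derivative is nonnegative. -/
theorem pow_mul_val_nonneg {k : ℕ} {l : List ℝ}
    (h : ∀ y, 0 ≤ y → y ≤ 6 → 0 ≤ y ^ k * val (wt (k + 1) l) y) {y : ℝ} (h0 : 0 ≤ y)
    (h6 : y ≤ 6) : 0 ≤ y ^ (k + 1) * val l y := by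
  have hmono : MonotoneOn (fun y => y ^ (k + 1) * val l y) (Set.Icc 0 6) := by
    refine monotoneOn_of_hasDerivWithinAt_nonneg (convex_Icc 0 6)
      (f' := fun y => y ^ k * val (wt (k + 1) l) y) ?_ ?_ ?_
    · exact fun u _ => (hasDerivAt_pow_mul_val l k u).continuousAt.continuousWithinAt
    · exact fun u _ => (hasDerivAt_pow_mul_val l k u).hasDerivWithinAt
    · intro u hu
      rw [interior_Icc] at hu
      exact h u hu.1.le hu.2.le
  have := hmono (a := 0) (b := y) ⟨le_rfl, by norm_num⟩ ⟨h0, h6⟩ h0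
  simpa using this

/-- After cancelling `y ^ (k + 1)`, the condition of `Majorizes.step` is a polynomial inequality
between the two coefficient lists. -/
theorem PolyMajorizes.step {k : ℕ} {l m : List ℝ} (hl : PolyMajorizes ω (k + 1) l)
    (h : ∀ y, 0 ≤ y → y ≤ 6 → val l y ≤ (k + 2 + y) * val (wt (k + 2) m) y) :
    PolyMajorizes ω (k + 2) m := by
  have hw : ((k + 1 : ℕ) : ℝ) + 1 = k + 2 := by push_cast; ring
  have hle : ∀ y : ℝ, 0 ≤ y → y ≤ 6 →
      y ^ (k + 1) * val l y ≤ (k + 2 + y) * (y ^ (k + 1) * val (wt (k + 2) m) y) := by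
    intro y h0 h6
    have := mul_le_mul_of_nonneg_left (h y h0 h6) (pow_nonneg h0 (k + 1))
    linarith
  refine ⟨hl.1.step (Q' := fun y => y ^ (k + 1) * val (wt (k + 2) m) y) hl.2 ?_ ?_ ?_ hle, ?_⟩
  · intro y
    have := hasDerivAt_pow_mul_val m (k + 1) y
    rwa [hw] at this
  · exact (continuous_pow _).mul (continuous_val _)
  · simp
  · refine fun y h0 h6 => pow_mul_val_nonneg (fun y h0 h6 => ?_) h0 h6
    rw [hw]
    have hk : (0 : ℝ) ≤ k := Nat.cast_nonneg k
    exact nonneg_of_mul_nonneg_right ((hl.2 y h0 h6).trans (hle y h0 h6)) (by linarith)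

theorem polyMajorizes_one (hc : ContinuousOn ω (Set.Ici 1))
    (hv : ∀ v : ℝ, 1 ≤ v → v ≤ 2 → ω v = 1 / v)
    (hd : ∀ v : ℝ, 2 < v → HasDerivAt ω ((ω (v - 1) - ω v) / v) v) :
    PolyMajorizes ω 1 c1 := by
  refine ⟨majorizes_one hc hv hd, fun y h0 h6 => ?_⟩
  rw [pow_one]
  rcases le_total y 1 with h | h
  · have key : 0 ≤ val c1 y := by
      simp only [val, c1]
      have B := bernstein_term_nonneg h0 h
      linarith [B 0 5, B 1 4, B 2 3, B 3 2, B 4 1, B 5 0]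
    positivity
  · have := cert_one_right h h6
    have h1 : 0 ≤ val c1 1 := by norm_num [val, c1]
    linarith

theorem PolyMajorizes.apply {k : ℕ} {l : List ℝ} (h : PolyMajorizes ω k l) (hk : k ≤ 11)
    (hk5 : 5 ≤ k) :
    buchstabIntegral ω k (1 / 12) 0 ≤ (11 - k) ^ k * val l (11 - k) := by
  have h1 : (k : ℝ) ≤ 11 := by exact_mod_cast hk
  have h2 : (5 : ℝ) ≤ k := by exact_mod_cast hk5
  have := h.1 (1 / 12) 0 (by norm_num) (by linarith) (by linarith)
  have e : (1 - 0) / (1 / 12) - ((k : ℝ) + 1) = 11 - k := by ring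
  rw [e] at this
  simpa using this

end Buchstab

/-! ### The numerical bounds -/

/-- The numerical inequalities `T₅ < log(12(1/4 - 1/12.4) - 1)`,
`T₆ < log(12(1/4 - 1/12.03) - 1)` and `T₇ < log(12(1/4 - 1/12.01) - 1)`. -/
theorem T567_numerical (ω : ℝ → ℝ) (hω_cont : ContinuousOn ω (Set.Ici 1))
    (hω_val : ∀ v : ℝ, 1 ≤ v → v ≤ 2 → ω v = 1 / v)
    (hω_deriv : ∀ v : ℝ, 2 < v → HasDerivAt ω ((ω (v - 1) - ω v) / v) v) :
    buchstabIntegral ω 5 (1/12) 0 < Real.log (12 * (1 / 4 - 1 / 12.4) - 1) ∧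
    buchstabIntegral ω 6 (1/12) 0 < Real.log (12 * (1 / 4 - 1 / 12.03) - 1) ∧
    buchstabIntegral ω 7 (1/12) 0 < Real.log (12 * (1 / 4 - 1 / 12.01) - 1) := by
  have m1 := polyMajorizes_one hω_cont hω_val hω_deriv
  have m2 : PolyMajorizes ω 2 c2 := m1.step (k := 0) fun y h0 h6 => by
    simpa using cert_2 h0 h6
  have m3 : PolyMajorizes ω 3 c3 := m2.step (k := 1) fun y h0 h6 => by
    convert cert_3 h0 h6 using 4 <;> norm_num
  have m4 : PolyMajorizes ω 4 c4 := m3.step (k := 2) fun y h0 h6 => by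
    convert cert_4 h0 h6 using 4 <;> norm_num
  have m5 : PolyMajorizes ω 5 c5 := m4.step (k := 3) fun y h0 h6 => by
    convert cert_5 h0 h6 using 4 <;> norm_num
  have m6 : PolyMajorizes ω 6 c6 := m5.step (k := 4) fun y h0 h6 => by
    convert cert_6 h0 h6 using 4 <;> norm_num
  have m7 : PolyMajorizes ω 7 c7 := m6.step (k := 5) fun y h0 h6 => by
    convert cert_7 h0 h6 using 4 <;> norm_num
  refine ⟨?_, ?_, ?_⟩
  · refine (m5.apply (by norm_num) le_rfl).trans_lt ?_
    -- `32/31 = (64/63) (63/62)`, and `log x ≥ 1 - 1/x` for each factor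
    have e : (12 * (1 / 4 - 1 / 12.4) - 1 : ℝ) = 64 / 63 * (63 / 62) := by norm_num
    have h1 := Real.one_sub_inv_le_log_of_pos (x := 64 / 63) (by norm_num)
    have h2 := Real.one_sub_inv_le_log_of_pos (x := 63 / 62) (by norm_num)
    rw [e, Real.log_mul (by norm_num) (by norm_num)]
    refine lt_of_lt_of_le ?_ (add_le_add h1 h2)
    norm_num [val, c5]
  · refine (m6.apply (by norm_num) (by norm_num)).trans_lt ?_
    refine lt_of_lt_of_le ?_ (Real.one_sub_inv_le_log_of_pos (by norm_num))
    norm_num [val, c6]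
  · refine (m7.apply (by norm_num) (by norm_num)).trans_lt ?_
    refine lt_of_lt_of_le ?_ (Real.one_sub_inv_le_log_of_pos (by norm_num))
    norm_num [val, c7]
end
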